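/- For the function k-SUM : [q]^n → {0,1}, which evaluates to 1 if and only if some k of the n input numbers sum to 0 modulo q, if q ≥ 2·C(n,k) (twice the binomial coefficient n choose k) then Q(k-SUM) = Ω(n^{k/(k+1)} / √k), where the constant hidden in the Ω is an absolute constant independent of n and k. -/

import Mathlib

open scoped BigOperators ENNReal

namespace QC

/-! ### Inputs and partial functions -/

/-- An input assigns to each index `i` a symbol from the alphabet `Fin (α i)`. -/
abbrev Input (ι : Type) (α : ι → ℕ) := ∀ i : ι, Fin (α i)

/-- A (possibly partial) Boolean-valued query function; `none` means the input
is outside the promise/domain. -/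
abbrev PartialFn (ι : Type) (α : ι → ℕ) := Input ι α → Option Bool

/-- A total function has every input in its domain. -/
def TotalFn {ι : Type} {α : ι → ℕ} (f : PartialFn ι α) : Prop := ∀ x, f x ≠ none

/-- Classical truth value of a proposition, as a `Bool`. -/
noncomputable def ofProp (P : Prop) : Bool := @decide P (Classical.propDecidable P)

/-! ### Decision trees and classical query complexity -/

/-- Decision trees over index set `ι` with alphabets `α` and leaf labels `L`. -/
inductive DTree (ι : Type) (α : ι → ℕ) (L : Type) : Type
  | leaf : L → DTree ι α L
  | node : (i : ι) → (Fin (α i) → DTree ι α L) → DTree ι α L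

namespace DTree

variable {ι : Type} {α : ι → ℕ} {L : Type}

/-- Evaluate a decision tree on an input. -/
def eval : DTree ι α L → Input ι α → L
  | leaf b, _ => b
  | node i child, x => eval (child (x i)) x

/-- The number of queries the tree makes on a given input. -/
def cost : DTree ι α L → Input ι α → ℕ
  | leaf _, _ => 0
  | node i child, x => cost (child (x i)) x + 1

/-- The depth (worst-case number of queries) of a decision tree. -/
def depth : DTree ι α L → ℕ
  | leaf _ => 0
  | node _ child => (Finset.univ.sup fun a => depth (child a)) + 1

end DTree

variable {ι : Type} {α : ι → ℕ}

/-- Deterministic query complexity `D(f)`. -/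
noncomputable def Dq (f : PartialFn ι α) : ℕ :=
  sInf {d | ∃ T : DTree ι α (Option Bool), T.depth ≤ d ∧
    ∀ x b, f x = some b → T.eval x = some b}

/-- Bounded-error randomized query complexity `R(f)` (worst-case queries,
success probability at least 2/3 on every domain input). -/
noncomputable def Rq (f : PartialFn ι α) : ℕ :=
  sInf {d | ∃ μ : PMF (DTree ι α (Option Bool)),
    (∀ T ∈ μ.support, T.depth ≤ d) ∧
    ∀ x b, f x = some b → 2/3 ≤ μ.toOuterMeasure {T | T.eval x = some b}}

/-- Zero-error randomized query complexity `R₀(f)` (worst-case queries): the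
algorithm never errs, and outputs `none` ("don't know") with probability at most 1/2. -/
noncomputable def R0q (f : PartialFn ι α) : ℕ :=
  sInf {d | ∃ μ : PMF (DTree ι α (Option Bool)),
    (∀ T ∈ μ.support, T.depth ≤ d) ∧
    (∀ T ∈ μ.support, ∀ x b, f x = some b → T.eval x = some b ∨ T.eval x = none) ∧
    ∀ x b, f x = some b → μ.toOuterMeasure {T | T.eval x = none} ≤ 1/2}

/-- Zero-error randomized query complexity, measured by the worst-case *expected*
number of queries over domain inputs (value in `ℝ≥0∞`). -/
noncomputable def R0expq (f : PartialFn ι α) : ℝ≥0∞ :=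
  sInf {c | ∃ μ : PMF (DTree ι α (Option Bool)),
    (∀ T ∈ μ.support, ∀ x b, f x = some b → T.eval x = some b ∨ T.eval x = none) ∧
    (∀ x b, f x = some b → μ.toOuterMeasure {T | T.eval x = none} ≤ 1/2) ∧
    (∀ x b, f x = some b → ∑' T, μ T * (T.cost x : ℝ≥0∞) ≤ c)}

/-- One-sided-error randomized query complexity `R₁(f)`: accept every 1-input with
probability at least 2/3, and never accept a 0-input. -/
noncomputable def R1q (f : PartialFn ι α) : ℕ :=
  sInf {d | ∃ μ : PMF (DTree ι α (Option Bool)),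
    (∀ T ∈ μ.support, T.depth ≤ d) ∧
    (∀ x, f x = some true → 2/3 ≤ μ.toOuterMeasure {T | T.eval x = some true}) ∧
    (∀ x, f x = some false → ∀ T ∈ μ.support, T.eval x ≠ some true)}

/-! ### Quantum query complexity -/

/-- The index set of the state space of a quantum query algorithm:
a query register `Σ i, Fin (α i)` together with a workspace register `Fin W`. -/
abbrev QIdx (ι : Type) (α : ι → ℕ) (W : ℕ) := (Σ i : ι, Fin (α i)) × Fin W

variable [Fintype ι] [DecidableEq ι]

/-- The standard query oracle for input `x`: the permutation matrix sending the basis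
vector `|i,a⟩|w⟩` to `|i, a + x i⟩|w⟩` (addition modulo `α i`). -/
noncomputable def oracleMatrix (W : ℕ) (x : Input ι α) :
    Matrix (QIdx ι α W) (QIdx ι α W) ℂ :=
  Matrix.of fun j j' =>
    if j.2 = j'.2 ∧ j.1 = ⟨j'.1.1, j'.1.2 + x j'.1.1⟩ then 1 else 0

/-- The product `U_T · O · U_{T-1} · O ⋯ O · U_0` of unitaries interleaved with oracle
calls, defining a `T`-query quantum algorithm. -/
noncomputable def qProd {τ : Type} [Fintype τ] (U : ℕ → Matrix τ τ ℂ) (Ox : Matrix τ τ ℂ) :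
    ℕ → Matrix τ τ ℂ
  | 0 => U 0
  | t + 1 => U (t + 1) * Ox * qProd U Ox t

/-- A quantum query algorithm: a number `T` of queries, a workspace size `W`,
unitaries `U 0, …, U T`, a unit initial state, and a measurement assigning to each
basis state an output in `Option Bool` (`none` = "don't know"). -/
structure QAlg (ι : Type) [Fintype ι] [DecidableEq ι] (α : ι → ℕ) where
  T : ℕ
  W : ℕ
  U : ℕ → Matrix (QIdx ι α W) (QIdx ι α W) ℂ
  unitary : ∀ t, U t ∈ Matrix.unitaryGroup (QIdx ι α W) ℂ
  init : QIdx ι α W → ℂ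
  init_norm : ∑ j, ‖init j‖ ^ 2 = 1
  out : QIdx ι α W → Option Bool

/-- The final state of a quantum algorithm on input `x`. -/
noncomputable def QAlg.finalState (A : QAlg ι α) (x : Input ι α) : QIdx ι α A.W → ℂ :=
  (qProd A.U (oracleMatrix A.W x) A.T).mulVec A.init

/-- The probability that the algorithm outputs `v` on input `x`. -/
noncomputable def QAlg.outProb (A : QAlg ι α) (x : Input ι α) (v : Option Bool) : ℝ :=
  ∑ j, if A.out j = v then ‖A.finalState x j‖ ^ 2 else 0

/-- Bounded-error quantum query complexity `Q(f)`. -/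
noncomputable def Qq (f : PartialFn ι α) : ℕ :=
  sInf {d | ∃ A : QAlg ι α, A.T ≤ d ∧
    ∀ x b, f x = some b → (2 : ℝ)/3 ≤ A.outProb x (some b)}

/-- Exact quantum query complexity `Q_E(f)`. -/
noncomputable def QEq (f : PartialFn ι α) : ℕ :=
  sInf {d | ∃ A : QAlg ι α, A.T ≤ d ∧
    ∀ x b, f x = some b → A.outProb x (some b) = 1}

/-- One-sided-error quantum query complexity `Q₁(f)`. -/
noncomputable def Q1q (f : PartialFn ι α) : ℕ :=
  sInf {d | ∃ A : QAlg ι α, A.T ≤ d ∧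
    (∀ x, f x = some true → (2 : ℝ)/3 ≤ A.outProb x (some true)) ∧
    (∀ x, f x = some false → A.outProb x (some true) = 0)}

/-- Zero-error quantum query complexity `Q₀(f)`: never wrong, outputs `none`
with probability at most 1/2. -/
noncomputable def Q0q (f : PartialFn ι α) : ℕ :=
  sInf {d | ∃ A : QAlg ι α, A.T ≤ d ∧
    ∀ x b, f x = some b → A.outProb x (some !b) = 0 ∧ A.outProb x none ≤ 1/2}

/-! ### Certificate complexity -/

/-- A partial assignment `ρ` is consistent with an input `x`. -/
def Consistent (ρ : ∀ i : ι, Option (Fin (α i))) (x : Input ι α) : Prop :=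
  ∀ i v, ρ i = some v → x i = v

/-- The number of fixed positions of a partial assignment. -/
noncomputable def certSize (ρ : ∀ i : ι, Option (Fin (α i))) : ℕ :=
  Nat.card {i // (ρ i).isSome}

/-- The certificate complexity of `f` at input `x`: the least size of a partial
assignment consistent with `x` forcing the value `f x` on all domain inputs. -/
noncomputable def CxAt (f : PartialFn ι α) (x : Input ι α) : ℕ :=
  sInf {s | ∃ ρ, Consistent ρ x ∧ (∀ y, Consistent ρ y → f y = none ∨ f y = f x) ∧
    certSize ρ ≤ s}

/-- Certificate complexity `C(f)`. -/
noncomputable def Cq (f : PartialFn ι α) : ℕ :=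
  sSup {s | ∃ x, f x ≠ none ∧ s = CxAt f x}

/-- One-certificate complexity `C¹(f)`. -/
noncomputable def C1q (f : PartialFn ι α) : ℕ :=
  sSup {s | ∃ x, f x = some true ∧ s = CxAt f x}

/-! ### Polynomial degree -/

/-- Exact polynomial degree `deg(f)`: least degree of a real polynomial agreeing
with `f` (as a 0/1 function of the numerical values of the input symbols) on its domain. -/
noncomputable def degq (f : PartialFn ι α) : ℕ :=
  sInf {d | ∃ p : MvPolynomial ι ℝ, p.totalDegree ≤ d ∧
    ∀ x b, f x = some b →
      MvPolynomial.eval (fun i => ((x i : ℕ) : ℝ)) p = if b then 1 else 0}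

/-- Approximate polynomial degree `adeg(f)`: least degree of a real polynomial
approximating `f` pointwise to error 1/3 on its domain. -/
noncomputable def adegq (f : PartialFn ι α) : ℕ :=
  sInf {d | ∃ p : MvPolynomial ι ℝ, p.totalDegree ≤ d ∧
    ∀ x b, f x = some b →
      |MvPolynomial.eval (fun i => ((x i : ℕ) : ℝ)) p - if b then 1 else 0| ≤ 1/3}

end QC
/-! ### Certifying functions and cheat sheets -/

namespace QC

variable {ι : Type} {α : ι → ℕ}

/-- `φ` is a certifying function for the partial function `f`: it accepts `(x, y)`
only when `x` is in the domain of `f` and the first bit of `y` equals `f x`; every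
domain input has some accepted certificate `y`; and the all-zeros `y` is never accepted. -/
def IsCertifying {k : ℕ} (hk : 0 < k) (f : PartialFn ι α)
    (φ : Input ι α → (Fin k → Fin 2) → Bool) : Prop :=
  (∀ x y, f x = none → φ x y = false) ∧
  (∀ x y b, f x = some b → y ⟨0, hk⟩ ≠ (if b then 1 else 0) → φ x y = false) ∧
  (∀ x b, f x = some b → ∃ y, φ x y = true) ∧
  (∀ x, φ x (fun _ => 0) = false)

/-- The index set of the input to a certifying function, viewed as a query function:
the original input together with `k` certificate bits. -/
abbrev CertIdx (ι : Type) (k : ℕ) := ι ⊕ Fin k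

/-- Alphabets for `CertIdx`. -/
def certAlphabet (α : ι → ℕ) (k : ℕ) : CertIdx ι k → ℕ := Sum.elim α fun _ => 2

/-- A certifying function viewed as a total query function on input ⊕ certificate bits. -/
def certFn {k : ℕ} (φ : Input ι α → (Fin k → Fin 2) → Bool) :
    PartialFn (CertIdx ι k) (certAlphabet α k) :=
  fun z => some (φ (fun i => z (Sum.inl i)) (fun q => z (Sum.inr q)))

/-- The index set of the input to the cheat sheet version of a function: `c` copies of
the original input, followed by `2^c` cells each holding `c` certificate strings of `k` bits. -/
abbrev CSIdx (ι : Type) (c k : ℕ) := (Fin c × ι) ⊕ (Fin (2 ^ c) × Fin c × Fin k)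

/-- Alphabets for `CSIdx`. -/
def csAlphabet (α : ι → ℕ) (c k : ℕ) : CSIdx ι c k → ℕ :=
  Sum.elim (fun p => α p.2) fun _ => 2

/-- The `i`-th copy of the original input inside a cheat sheet input. -/
def csX {c k : ℕ} (z : Input (CSIdx ι c k) (csAlphabet α c k)) (i : Fin c) : Input ι α :=
  fun p => z (Sum.inl (i, p))

/-- The `i`-th certificate string in the `ℓ`-th cheat sheet cell. -/
def csY {c k : ℕ} (z : Input (CSIdx ι c k) (csAlphabet α c k)) (ℓ : Fin (2 ^ c))
    (i : Fin c) : Fin k → Fin 2 :=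
  fun q => z (Sum.inr (ℓ, i, q))

/-- The number in `[2^c]` whose binary representation is the bit string `b`. -/
def binToFin (c : ℕ) (b : Fin c → Bool) : Fin (2 ^ c) :=
  ⟨(∑ i, if b i then 2 ^ (i : ℕ) else 0) % 2 ^ c, Nat.mod_lt _ (by positivity)⟩

/-- The defining condition of the cheat sheet function: all `c` copies lie in the
domain of `f`, and the cell addressed by their `f`-values holds certificates
accepted by `φ` for each copy. -/
def CSCond {c k : ℕ} (f : PartialFn ι α) (φ : Input ι α → (Fin k → Fin 2) → Bool)
    (z : Input (CSIdx ι c k) (csAlphabet α c k)) : Prop :=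
  ∃ bvec : Fin c → Bool, (∀ i, f (csX z i) = some (bvec i)) ∧
    ∀ i, φ (csX z i) (csY z (binToFin c bvec) i) = true

/-- The cheat sheet version of `f` with respect to the certifying function `φ`,
with `c` copies of `f`. It is a total function. -/
noncomputable def cheatSheet (c : ℕ) {k : ℕ} (f : PartialFn ι α)
    (φ : Input ι α → (Fin k → Fin 2) → Bool) :
    PartialFn (CSIdx ι c k) (csAlphabet α c k) :=
  fun z => some (ofProp (CSCond f φ z))

/-! ### OR / AND compositions -/

/-- The `OR` function on `m` bits (alphabet `Fin 2`). -/
def orFn (m : ℕ) (z : Fin m → Fin 2) : Fin 2 := if ∃ j, z j = 1 then 1 else 0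

/-- The `AND` function on `m` bits (alphabet `Fin 2`). -/
def andFn (m : ℕ) (z : Fin m → Fin 2) : Fin 2 := if ∀ j, z j = 1 then 1 else 0

/-- The composition `f ∘ OR_m`. -/
def composeOr {n : ℕ} (f : PartialFn (Fin n) fun _ => 2) (m : ℕ) :
    PartialFn (Fin n × Fin m) (fun _ => 2) :=
  fun z => f fun i => orFn m fun j => z (i, j)

/-- The composition `f ∘ AND_m ∘ OR_m`. -/
def composeAndOr {n : ℕ} (f : PartialFn (Fin n) fun _ => 2) (m : ℕ) :
    PartialFn (Fin n × Fin m × Fin m) (fun _ => 2) :=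
  fun z => f fun i => andFn m fun j => orFn m fun l => z (i, j, l)

/-! ### k-SUM, Block k-sum, BKK and its recursive composition -/

/-- The `k`-SUM function on `n` numbers from `[q]`: is there a set of `k` of the
input numbers summing to `0` modulo `q`? -/
noncomputable def kSUMfn (n q k : ℕ) : PartialFn (Fin n) (fun _ => q) :=
  fun x => some (ofProp (∃ S : Finset (Fin n), S.card = k ∧
    (∑ i ∈ S, (x i : ℕ)) % q = 0))

/-- Number of ones in a block of bits. -/
def onesCount {B : ℕ} (z : Fin B → Fin 2) : ℕ := (Finset.univ.filter fun j => z j = 1).card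

/-- The number encoded in binary by a block of bits. -/
def blockVal {B : ℕ} (z : Fin B → Fin 2) : ℕ := ∑ j, if z j = 1 then 2 ^ (j : ℕ) else 0

/-- A block is balanced if it has an equal number of 0s and 1s. -/
def isBalanced {B : ℕ} (z : Fin B → Fin 2) : Prop := 2 * onesCount z = B

/-- Block `k`-sum on `nb` blocks of `B` bits each: value 1 iff there are `k` balanced
blocks whose encoded numbers sum to 0 (mod `2^B`) and every other block has at least
as many 1s as 0s. -/
noncomputable def blockKSumBool (nb B k : ℕ) (z : Fin nb × Fin B → Fin 2) : Bool :=
  ofProp (∃ S : Finset (Fin nb), S.card = k ∧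
    (∀ i ∈ S, isBalanced fun j => z (i, j)) ∧
    (∑ i ∈ S, blockVal fun j => z (i, j)) % 2 ^ B = 0 ∧
    ∀ i ∉ S, B ≤ 2 * onesCount fun j => z (i, j))

/-- The Boolean version of `k`-SUM on `m` numbers of `w` bits each (mod `2^w`). -/
noncomputable def kSumBool (m w k : ℕ) (z : Fin m × Fin w → Fin 2) : Bool :=
  ofProp (∃ S : Finset (Fin m), S.card = k ∧
    (∑ i ∈ S, blockVal fun j => z (i, j)) % 2 ^ w = 0)

/-- Block size of the outer Block `k`-sum in `BKK` on (roughly) `n` outer bits. -/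
def bkkB (n k : ℕ) : ℕ := 10 * k * Nat.log 2 n
/-- Number of blocks of the outer Block `k`-sum in `BKK`. -/
def bkkNB (n k : ℕ) : ℕ := n / bkkB n k
/-- Bits per number of the inner Boolean `k`-SUM in `BKK`. -/
def bkkW (n k : ℕ) : ℕ := k * Nat.log 2 n
/-- Number of numbers of the inner Boolean `k`-SUM in `BKK`. -/
def bkkM (n k : ℕ) : ℕ := n / bkkW n k

/-- The index set of the inputs of `BKK_{n²,k}` (one inner `k`-SUM input bit for
each outer Block `k`-sum input bit; roughly `n²` bits in total). -/
abbrev BKKIdx (n k : ℕ) := (Fin (bkkNB n k) × Fin (bkkB n k)) × (Fin (bkkM n k) × Fin (bkkW n k))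

/-- `BKK_{n²,k}`: Block `k`-sum composed with the Boolean version of `k`-SUM. -/
noncomputable def bkkBool (n k : ℕ) (z : BKKIdx n k → Fin 2) : Bool :=
  blockKSumBool (bkkNB n k) (bkkB n k) k fun ob =>
    if kSumBool (bkkM n k) (bkkW n k) k (fun p => z (ob, p)) then 1 else 0

/-- `BKK_{n²,k}` as a total query function. -/
noncomputable def BKKfn (n k : ℕ) : PartialFn (BKKIdx n k) (fun _ => 2) :=
  fun z => some (bkkBool n k z)

/-- The `d`-fold self-composition of a total Boolean function `g`: a depth-`d` tree
each of whose internal nodes is a copy of `g`; input bits are indexed by root-to-leaf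
paths `Fin d → I`. -/
noncomputable def iterFn {I : Type} (g : (I → Fin 2) → Bool) :
    (d : ℕ) → ((Fin d → I) → Fin 2) → Bool
  | 0, z => decide (z (fun i => i.elim0) = 1)
  | d + 1, z => g fun a => if iterFn g d (fun v => z (Fin.cons a v)) then 1 else 0

/-- The recursion depth used for `RecBKK`: `d = (4/25)·log n / log log n`. -/
def recD (n : ℕ) : ℕ := 4 * Nat.log 2 n / (25 * Nat.log 2 (Nat.log 2 n))

/-- The index set of the inputs of `RecBKK`. -/
abbrev RecIdx (n : ℕ) := Fin (recD n) → BKKIdx n (Nat.log 2 n)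

/-- `RecBKK`: the `recD n`-fold self-composition of `BKK` with `k = log n`. -/
noncomputable def RecBKKfn (n : ℕ) : PartialFn (RecIdx n) (fun _ => 2) :=
  fun z => some (iterFn (bkkBool n (Nat.log 2 n)) (recD n) z)

/-- The nominal input size `N = n^{2d}` of `RecBKK`. -/
def recN (n : ℕ) : ℕ := n ^ (2 * recD n)

end QC

namespace QC.Planted

open Finset Matrix

set_option linter.unusedSectionVars false

/-! ### Joint states

The algorithm is run on a uniform superposition of inputs `ι → ZMod q`. In the Fourier basis
of the input register such a joint state is a function `φ : (ι → ZMod q) → τ → ℂ`, where `τ`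
indexes the basis of the algorithm's own register. -/

section JointStates

variable {ι τ : Type} {q : ℕ}

/-- Joint states of the (Fourier transformed) input register and the algorithm register. -/
abbrev JState (ι τ : Type) (q : ℕ) := (ι → ZMod q) → τ → ℂ

/-- Apply a matrix to the algorithm register. -/
def act [Fintype τ] (M : Matrix τ τ ℂ) (φ : JState ι τ q) : JState ι τ q :=
  fun a => M *ᵥ φ a

/-- Restrict a joint state to the frequencies satisfying `P`. -/
noncomputable def restr (P : (ι → ZMod q) → Prop) (φ : JState ι τ q) : JState ι τ q :=
  open Classical in fun a j => if P a then φ a j else 0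

/-- The frequency vector which is constantly `c` on `S` and vanishes elsewhere. -/
def constOn [DecidableEq ι] (S : Finset ι) (c : ZMod q) : ι → ZMod q :=
  fun i => if i ∈ S then c else 0

/-- The frequencies whose support contains `S`. -/
def Covers (S : Finset ι) (a : ι → ZMod q) : Prop := ∀ i ∈ S, a i ≠ 0

/-- The support of a frequency vector. -/
noncomputable def supp [Fintype ι] (a : ι → ZMod q) : Finset ι :=
  open Classical in univ.filter fun i => a i ≠ 0

/-- The effect of a phase query on a joint state: basis state `j` of the algorithm register
queries position `idx j` with multiplier `β j`. -/
def shift [DecidableEq ι] (idx : τ → ι) (β : τ → ZMod q) (φ : JState ι τ q) : JState ι τ q :=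
  fun a j => φ (a - Pi.single (idx j) (β j)) j

/-- Conditioning the input register on the inputs whose sum over `S` vanishes, normalised. -/
noncomputable def plant [DecidableEq ι] [NeZero q] (S : Finset ι) (φ : JState ι τ q) :
    JState ι τ q :=
  fun a j => ((Real.sqrt q : ℝ) : ℂ)⁻¹ * ∑ c : ZMod q, φ (a + constOn S c) j

variable [Fintype ι] [DecidableEq ι] [Fintype τ] [NeZero q]

/-- The Euclidean norm of a joint state. -/
noncomputable def l2 (φ : JState ι τ q) : ℝ :=
  ‖(WithLp.toLp 2 fun p : (ι → ZMod q) × τ => φ p.1 p.2 :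
    EuclideanSpace ℂ ((ι → ZMod q) × τ))‖

lemma l2_nonneg (φ : JState ι τ q) : 0 ≤ l2 φ := norm_nonneg _

lemma l2_sq (φ : JState ι τ q) : l2 φ ^ 2 = ∑ a, ∑ j, ‖φ a j‖ ^ 2 := by
  rw [l2, EuclideanSpace.norm_sq_eq, Fintype.sum_prod_type]

lemma l2_add_le (φ ψ : JState ι τ q) : l2 (φ + ψ) ≤ l2 φ + l2 ψ := by
  unfold l2
  refine le_trans (le_of_eq ?_) (norm_add_le _ _)
  rfl

lemma l2_sub_le (φ ψ : JState ι τ q) : l2 (φ - ψ) ≤ l2 φ + l2 ψ := by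
  unfold l2
  refine le_trans (le_of_eq ?_) (norm_sub_le _ _)
  rfl

lemma sum_norm_sq_mulVec [DecidableEq τ] {M : Matrix τ τ ℂ} (hM : M ∈ Matrix.unitaryGroup τ ℂ)
    (v : τ → ℂ) : ∑ j, ‖(M *ᵥ v) j‖ ^ 2 = ∑ j, ‖v j‖ ^ 2 := by
  have key : ∀ w : τ → ℂ, ((∑ j, ‖w j‖ ^ 2 : ℝ) : ℂ) = star w ⬝ᵥ w := by
    intro w
    simp only [dotProduct, Pi.star_apply, Complex.ofReal_sum, Complex.ofReal_pow]
    refine Finset.sum_congr rfl fun j _ => ?_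
    rw [RCLike.star_def, RCLike.conj_mul]
    rfl
  have h : star M * M = 1 := (Matrix.mem_unitaryGroup_iff').1 hM
  apply Complex.ofReal_injective
  rw [key, key, Matrix.star_mulVec, Matrix.dotProduct_mulVec, Matrix.vecMul_vecMul,
    ← Matrix.star_eq_conjTranspose, h, Matrix.vecMul_one]

lemma l2_act [DecidableEq τ] {M : Matrix τ τ ℂ} (hM : M ∈ Matrix.unitaryGroup τ ℂ)
    (φ : JState ι τ q) : l2 (act M φ) = l2 φ := by
  refine (sq_eq_sq₀ (l2_nonneg _) (l2_nonneg _)).1 ?_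
  simp only [l2_sq, act, sum_norm_sq_mulVec hM]

lemma l2_shift (idx : τ → ι) (β : τ → ZMod q) (φ : JState ι τ q) :
    l2 (shift idx β φ) = l2 φ := by
  refine (sq_eq_sq₀ (l2_nonneg _) (l2_nonneg _)).1 ?_
  rw [l2_sq, l2_sq, Finset.sum_comm, Finset.sum_comm (s := univ) (t := (univ : Finset τ))]
  refine Finset.sum_congr rfl fun j _ => ?_
  exact Equiv.sum_comp (Equiv.subRight (Pi.single (idx j) (β j))) fun a => ‖φ a j‖ ^ 2

lemma plant_add (S : Finset ι) (φ ψ : JState ι τ q) :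
    plant S (φ + ψ) = plant S φ + plant S ψ := by
  funext a j
  simp [plant, Finset.sum_add_distrib, mul_add]

lemma plant_sub (S : Finset ι) (φ ψ : JState ι τ q) :
    plant S (φ - ψ) = plant S φ - plant S ψ := by
  funext a j
  simp [plant, Finset.sum_sub_distrib, mul_sub]

lemma plant_act (S : Finset ι) (M : Matrix τ τ ℂ) (φ : JState ι τ q) :
    plant S (act M φ) = act M (plant S φ) := by
  funext a j
  simp only [plant, act, mulVec, dotProduct, Finset.mul_sum]
  rw [Finset.sum_comm]
  refine Finset.sum_congr rfl fun j' _ => Finset.sum_congr rfl fun c _ => by ring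

lemma plant_shift (S : Finset ι) (idx : τ → ι) (β : τ → ZMod q) (φ : JState ι τ q) :
    plant S (shift idx β φ) = shift idx β (plant S φ) := by
  funext a j
  simp only [plant, shift, add_sub_right_comm]

lemma restr_act (P : (ι → ZMod q) → Prop) (M : Matrix τ τ ℂ) (φ : JState ι τ q) :
    restr P (act M φ) = act M (restr P φ) := by
  funext a j
  by_cases h : P a <;> simp [restr, act, h, mulVec, dotProduct]

lemma restr_add_restr_not (P : (ι → ZMod q) → Prop) (φ : JState ι τ q) :
    restr P φ + restr (fun a => ¬ P a) φ = φ := by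
  funext a j
  by_cases h : P a <;> simp [restr, h]

lemma l2_restr_sq_le (P : (ι → ZMod q) → Prop) (φ : JState ι τ q) :
    l2 (restr P φ) ^ 2 ≤ l2 φ ^ 2 := by
  rw [l2_sq, l2_sq]
  refine Finset.sum_le_sum fun a _ => Finset.sum_le_sum fun j _ => ?_
  by_cases h : P a <;> simp [restr, h]

lemma constOn_add (S : Finset ι) (c d : ZMod q) :
    constOn S (c + d) = constOn S c + constOn S d := by
  funext i
  by_cases h : i ∈ S <;> simp [constOn, h]

lemma constOn_zero (S : Finset ι) : constOn S (0 : ZMod q) = 0 := by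
  funext i
  simp [constOn]

lemma constOn_neg (S : Finset ι) (c : ZMod q) : constOn S (-c) = -constOn S c := by
  funext i
  by_cases h : i ∈ S <;> simp [constOn, h]

lemma l2_plant_sq (S : Finset ι) (φ : JState ι τ q) :
    ((l2 (plant S φ) ^ 2 : ℝ) : ℂ) =
      ∑ c : ZMod q, ∑ a, ∑ j, φ a j * star (φ (a + constOn S c) j) := by
  have hq : (0 : ℝ) < q := Nat.cast_pos.2 (NeZero.pos q)
  have hq0 : (q : ℂ) ≠ 0 := Nat.cast_ne_zero.2 (NeZero.ne q)
  have key : ∀ a j, ((‖plant S φ a j‖ ^ 2 : ℝ) : ℂ) =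
      (q : ℂ)⁻¹ * ∑ c : ZMod q, ∑ d : ZMod q,
        φ (a + constOn S c) j * star (φ (a + constOn S d) j) := by
    intro a j
    have h1 : (‖((Real.sqrt q : ℝ) : ℂ)⁻¹‖ ^ 2 : ℝ) = (q : ℝ)⁻¹ := by
      rw [norm_inv, Complex.norm_real, inv_pow, Real.norm_eq_abs, sq_abs, Real.sq_sqrt hq.le]
    rw [plant, norm_mul, mul_pow, h1, Complex.ofReal_mul, Complex.ofReal_pow]
    have h2 : ∀ z : ℂ, ((‖z‖ : ℝ) : ℂ) ^ 2 = z * star z := by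
      intro z
      rw [RCLike.star_def, RCLike.mul_conj]
      rfl
    rw [h2, star_sum, Finset.sum_mul_sum]
    simp
  have shifted : ∀ (j : τ) (c : ZMod q), ∑ a : ι → ZMod q, ∑ d : ZMod q,
      φ (a + constOn S c) j * star (φ (a + constOn S d) j) =
      ∑ a : ι → ZMod q, ∑ d : ZMod q, φ a j * star (φ (a + constOn S d) j) := by
    intro j c
    rw [← Equiv.sum_comp (Equiv.addRight (constOn S c)) fun a : ι → ZMod q =>
      ∑ d : ZMod q, φ a j * star (φ (a + constOn S d) j)]
    refine Finset.sum_congr rfl fun a _ => ?_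
    rw [← Equiv.sum_comp (Equiv.addLeft c) fun d : ZMod q =>
      φ (a + constOn S c) j * star (φ (a + constOn S d) j)]
    simp only [Equiv.coe_addLeft, Equiv.coe_addRight, constOn_add, add_assoc]
  calc ((l2 (plant S φ) ^ 2 : ℝ) : ℂ)
      = ∑ j, ∑ a : ι → ZMod q, ((‖plant S φ a j‖ ^ 2 : ℝ) : ℂ) := by
        rw [l2_sq, Finset.sum_comm]
        simp only [Complex.ofReal_sum]
    _ = ∑ j, (q : ℂ)⁻¹ * ∑ c : ZMod q, ∑ a : ι → ZMod q, ∑ d : ZMod q,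
          φ (a + constOn S c) j * star (φ (a + constOn S d) j) := by
        refine Finset.sum_congr rfl fun j _ => ?_
        rw [Finset.sum_congr rfl fun a _ => key a j, ← Finset.mul_sum, Finset.sum_comm]
    _ = ∑ j, ∑ a : ι → ZMod q, ∑ d : ZMod q, φ a j * star (φ (a + constOn S d) j) := by
        refine Finset.sum_congr rfl fun j _ => ?_
        rw [Finset.sum_congr rfl fun c _ => shifted j c, Finset.sum_const, Finset.card_univ,
          ZMod.card, nsmul_eq_mul, ← mul_assoc, inv_mul_cancel₀ hq0, one_mul]
    _ = ∑ c : ZMod q, ∑ a, ∑ j, φ a j * star (φ (a + constOn S c) j) := by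
        rw [Finset.sum_comm, Finset.sum_comm (s := (univ : Finset (ZMod q)))]
        exact Finset.sum_congr rfl fun a _ => Finset.sum_comm

/-- Planting is isometric on states with at most one frequency in each coset. -/
lemma l2_plant_eq (S : Finset ι) (φ : JState ι τ q)
    (h : ∀ a j, ∀ c : ZMod q, c ≠ 0 → φ a j ≠ 0 → φ (a + constOn S c) j = 0) :
    l2 (plant S φ) ^ 2 = l2 φ ^ 2 := by
  apply Complex.ofReal_injective
  rw [l2_plant_sq, Finset.sum_eq_single 0, l2_sq, Complex.ofReal_sum]
  · refine Finset.sum_congr rfl fun a _ => ?_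
    rw [Complex.ofReal_sum]
    refine Finset.sum_congr rfl fun j _ => ?_
    rw [constOn_zero, add_zero, RCLike.star_def, RCLike.mul_conj]
    simp
  · intro c _ hc
    refine Finset.sum_eq_zero fun a _ => Finset.sum_eq_zero fun j _ => ?_
    by_cases h0 : φ a j = 0
    · simp [h0]
    · simp [h a j c hc h0]
  · simp

end JointStates

/-! ### Evolution of the planted states -/

section Evolution

variable {ι τ : Type} {q : ℕ} [Fintype ι] [DecidableEq ι] [Fintype τ] [NeZero q]

lemma mem_supp {a : ι → ZMod q} {i : ι} : i ∈ supp a ↔ a i ≠ 0 := by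
  simp [supp]

/-- The part of the queried state for which the query takes a frequency `b` to a frequency `a`
with `R b a`. -/
noncomputable def jump (R : (ι → ZMod q) → (ι → ZMod q) → Prop) (idx : τ → ι) (β : τ → ZMod q)
    (φ : JState ι τ q) : JState ι τ q :=
  open Classical in fun a j =>
    if R (a - Pi.single (idx j) (β j)) a then φ (a - Pi.single (idx j) (β j)) j else 0

/-- The query makes the support contain `S`. -/
def Enters (S : Finset ι) (b a : ι → ZMod q) : Prop := ¬ Covers S b ∧ Covers S a

/-- After the query the support no longer contains `S`. -/
def Leaves (S : Finset ι) (b a : ι → ZMod q) : Prop := Covers S b ∧ ¬ Covers S a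

lemma restr_shift (S : Finset ι) (idx : τ → ι) (β : τ → ZMod q) (φ : JState ι τ q) :
    restr (Covers S) (shift idx β φ) = shift idx β (restr (Covers S) φ) +
      (jump (Enters S) idx β φ - jump (Leaves S) idx β φ) := by
  funext a j
  by_cases h₁ : Covers S a <;> by_cases h₂ : Covers S (a - Pi.single (idx j) (β j)) <;>
    simp [restr, shift, jump, Enters, Leaves, h₁, h₂]

lemma eq_of_enters {S : Finset ι} {a : ι → ZMod q} {i : ι} {b : ZMod q}
    (h : Enters S (a - Pi.single i b) a) : i ∈ S ∧ a i = b := by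
  obtain ⟨h₁, h₂⟩ := h
  simp only [Covers, not_forall, not_not] at h₁
  obtain ⟨l, hl, h₁⟩ := h₁
  by_cases hli : l = i
  · subst hli
    exact ⟨hl, by simpa [sub_eq_zero] using h₁⟩
  · exact absurd (by simpa [hli] using h₁) (h₂ l hl)

lemma eq_zero_of_leaves {S : Finset ι} {a : ι → ZMod q} {i : ι} {b : ZMod q}
    (h : Leaves S (a - Pi.single i b) a) : i ∈ S ∧ a i = 0 := by
  obtain ⟨h₁, h₂⟩ := h
  simp only [Covers, not_forall, not_not] at h₂
  obtain ⟨l, hl, h₂⟩ := h₂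
  by_cases hli : l = i
  · subst hli
    exact ⟨hl, h₂⟩
  · exact absurd (by simpa [hli] using h₂) (h₁ l hl)

lemma l2_plant_jump (S : Finset ι) (idx : τ → ι) (β : τ → ZMod q)
    (R : (ι → ZMod q) → (ι → ZMod q) → Prop) (v : ZMod q → ZMod q)
    (hR : ∀ a i b, R (a - Pi.single i b) a → i ∈ S ∧ a i = v b) (φ : JState ι τ q) :
    l2 (plant S (jump R idx β φ)) ^ 2 = l2 (jump R idx β φ) ^ 2 := by
  refine l2_plant_eq S _ fun a j c hc h => ?_
  by_contra h'
  have h₁ : R (a - Pi.single (idx j) (β j)) a := by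
    by_contra hn
    exact h (by simp [jump, hn])
  have h₂ : R (a + constOn S c - Pi.single (idx j) (β j)) (a + constOn S c) := by
    by_contra hn
    exact h' (by simp [jump, hn])
  obtain ⟨hS, e₁⟩ := hR _ _ _ h₁
  have e₂ := (hR _ _ _ h₂).2
  rw [Pi.add_apply, e₁] at e₂
  simp only [constOn, hS, if_true, add_eq_left] at e₂
  exact hc e₂

lemma l2_jump_sq (R : (ι → ZMod q) → (ι → ZMod q) → Prop) (idx : τ → ι) (β : τ → ZMod q)
    (φ : JState ι τ q) : l2 (jump R idx β φ) ^ 2 =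
      ∑ j, ∑ a, open Classical in
        if R a (a + Pi.single (idx j) (β j)) then ‖φ a j‖ ^ 2 else 0 := by
  classical
  rw [l2_sq, Finset.sum_comm]
  refine Finset.sum_congr rfl fun j _ => ?_
  rw [← Equiv.sum_comp (Equiv.addRight (Pi.single (idx j) (β j)))]
  refine Finset.sum_congr rfl fun a _ => ?_
  simp only [jump, Equiv.coe_addRight, add_sub_cancel_right]
  split_ifs <;> simp

/-- Few `k`-sets change their status when a single coordinate is modified. -/
lemma card_changed_le (k t : ℕ) (a : ι → ZMod q) (ha : (supp a).card ≤ t) (i : ι)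
    (b : ZMod q) [DecidablePred fun S : Finset ι =>
      Enters S a (a + Pi.single i b) ∨ Leaves S a (a + Pi.single i b)] :
    ((powersetCard k (univ : Finset ι)).filter fun S =>
      Enters S a (a + Pi.single i b) ∨ Leaves S a (a + Pi.single i b)).card ≤
      t.choose (k - 1) := by
  have hi : ∀ S : Finset ι, Enters S a (a + Pi.single i b) ∨ Leaves S a (a + Pi.single i b) →
      i ∈ S := by
    rintro S (h | h)
    · exact (eq_of_enters (a := a + Pi.single i b) (b := b) (by simpa using h)).1
    · exact (eq_zero_of_leaves (a := a + Pi.single i b) (b := b) (by simpa using h)).1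
  have hsub : ∀ S : Finset ι,
      Enters S a (a + Pi.single i b) ∨ Leaves S a (a + Pi.single i b) →
      S.erase i ⊆ supp a := by
    rintro S (h | h) l hl
    · have hl' := h.2 l (mem_of_mem_erase hl)
      rw [mem_supp]
      simpa [ne_of_mem_erase hl] using hl'
    · exact mem_supp.2 (h.1 l (mem_of_mem_erase hl))
  calc _ ≤ (powersetCard (k - 1) (supp a)).card := by
        refine Finset.card_le_card_of_injOn (fun S => S.erase i) ?_ ?_
        · intro S hS
          simp only [coe_filter, Set.mem_ofPred_eq, mem_powersetCard, subset_univ, true_and] at hS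
          rw [mem_coe, mem_powersetCard, card_erase_of_mem (hi S hS.2), hS.1]
          exact ⟨hsub S hS.2, rfl⟩
        · intro S hS S' hS' h
          simp only [coe_filter, Set.mem_ofPred_eq] at hS hS'
          rw [← insert_erase (hi S hS.2), ← insert_erase (hi S' hS'.2)]
          exact congrArg (insert i) h
    _ = (supp a).card.choose (k - 1) := card_powersetCard _ _
    _ ≤ t.choose (k - 1) := Nat.choose_le_choose _ ha

lemma sum_l2_jump_sq_le (k t : ℕ) (idx : τ → ι) (β : τ → ZMod q)
    (φ : JState ι τ q) (hφ : ∀ a, t < (supp a).card → φ a = 0) :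
    ∑ S ∈ powersetCard k (univ : Finset ι),
      (l2 (jump (Enters S) idx β φ) ^ 2 + l2 (jump (Leaves S) idx β φ) ^ 2) ≤
      (t.choose (k - 1) : ℝ) * l2 φ ^ 2 := by
  classical
  have h₁ : ∀ S : Finset ι,
      l2 (jump (Enters S) idx β φ) ^ 2 + l2 (jump (Leaves S) idx β φ) ^ 2 =
      ∑ j, ∑ a, if Enters S a (a + Pi.single (idx j) (β j)) ∨
        Leaves S a (a + Pi.single (idx j) (β j)) then ‖φ a j‖ ^ 2 else 0 := by
    intro S
    rw [l2_jump_sq, l2_jump_sq, ← Finset.sum_add_distrib]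
    refine Finset.sum_congr rfl fun j _ => ?_
    rw [← Finset.sum_add_distrib]
    refine Finset.sum_congr rfl fun a _ => ?_
    by_cases e₁ : Covers S a <;> by_cases e₂ : Covers S (a + Pi.single (idx j) (β j)) <;>
      simp [Enters, Leaves, e₁, e₂]
  rw [Finset.sum_congr rfl fun S _ => h₁ S, Finset.sum_comm, l2_sq, Finset.sum_comm (s := univ)
    (t := (univ : Finset τ)), Finset.mul_sum]
  refine Finset.sum_le_sum fun j _ => ?_
  rw [Finset.sum_comm, Finset.mul_sum]
  refine Finset.sum_le_sum fun a _ => ?_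
  rw [← Finset.sum_filter, Finset.sum_const, nsmul_eq_mul]
  by_cases ha : (supp a).card ≤ t
  · refine mul_le_mul_of_nonneg_right ?_ (by positivity)
    exact_mod_cast card_changed_le k t a ha (idx j) (β j)
  · simp [hφ a (not_le.1 ha)]

/-- The joint state after `t` phase queries interleaved with the unitaries `V`. -/
noncomputable def evolve (idx : τ → ι) (β : τ → ZMod q) (V : ℕ → Matrix τ τ ℂ) (v : τ → ℂ) :
    ℕ → JState ι τ q
  | 0 => fun a => if a = 0 then V 0 *ᵥ v else 0
  | t + 1 => act (V (t + 1)) (shift idx β (evolve idx β V v t))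

variable (idx : τ → ι) (β : τ → ZMod q) {V : ℕ → Matrix τ τ ℂ} {v : τ → ℂ}

lemma l2_evolve [DecidableEq τ] (hV : ∀ t, V t ∈ Matrix.unitaryGroup τ ℂ)
    (hv : ∑ j, ‖v j‖ ^ 2 = 1) (t : ℕ) : l2 (evolve idx β V v t) = 1 := by
  induction t with
  | zero =>
    refine (sq_eq_sq₀ (l2_nonneg _) zero_le_one).1 ?_
    rw [l2_sq, Finset.sum_eq_single 0]
    · simp only [evolve, if_true, sum_norm_sq_mulVec (hV 0), hv, one_pow]
    · intro a _ ha
      simp [evolve, ha]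
    · simp
  | succ t ih => rw [evolve, l2_act (hV _), l2_shift, ih]

lemma evolve_eq_zero (t : ℕ) :
    ∀ a, t < (supp a).card → evolve idx β V v t a = 0 := by
  induction t with
  | zero =>
    intro a ha
    have : a ≠ 0 := by
      rintro rfl
      simp [supp] at ha
    simp [evolve, this]
  | succ t ih =>
    intro a ha
    have hz : shift idx β (evolve idx β V v t) a = 0 := by
      funext j
      refine congrFun (ih _ ?_) j
      have hsub : supp a ⊆ insert (idx j) (supp (a - Pi.single (idx j) (β j))) := by
        intro l hl
        rw [mem_insert, mem_supp]
        by_cases hlj : l = idx j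
        · exact Or.inl hlj
        · right
          simpa [hlj] using mem_supp.1 hl
      have := (card_le_card hsub).trans (card_insert_le _ _)
      omega
    simp [evolve, act, hz]

lemma l2_plant_covers_succ [DecidableEq τ] (hV : ∀ t, V t ∈ Matrix.unitaryGroup τ ℂ)
    (S : Finset ι) (t : ℕ) :
    l2 (plant S (restr (Covers S) (evolve idx β V v (t + 1)))) ≤
      l2 (plant S (restr (Covers S) (evolve idx β V v t))) +
      (l2 (jump (Enters S) idx β (evolve idx β V v t)) +
        l2 (jump (Leaves S) idx β (evolve idx β V v t))) := by
  rw [evolve, restr_act, plant_act, l2_act (hV _), restr_shift, plant_add, plant_shift]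
  refine (l2_add_le _ _).trans ?_
  rw [l2_shift, plant_sub]
  refine add_le_add le_rfl ((l2_sub_le _ _).trans (le_of_eq ?_))
  congr 1
  · exact (sq_eq_sq₀ (l2_nonneg _) (l2_nonneg _)).1
      (l2_plant_jump S idx β _ id (fun a i b h => eq_of_enters h) _)
  · exact (sq_eq_sq₀ (l2_nonneg _) (l2_nonneg _)).1
      (l2_plant_jump S idx β _ (fun _ => 0) (fun a i b h => eq_zero_of_leaves h) _)

lemma l2_plant_covers_le [DecidableEq τ] (hV : ∀ t, V t ∈ Matrix.unitaryGroup τ ℂ)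
    (S : Finset ι) (hS : S.Nonempty) (T : ℕ) :
    l2 (plant S (restr (Covers S) (evolve idx β V v T))) ≤
      ∑ t ∈ range T, (l2 (jump (Enters S) idx β (evolve idx β V v t)) +
        l2 (jump (Leaves S) idx β (evolve idx β V v t))) := by
  induction T with
  | zero =>
    have hz : restr (Covers S) (evolve idx β V v 0) = 0 := by
      funext a j
      by_cases ha : a = 0
      · obtain ⟨i, hi⟩ := hS
        have : ¬ Covers S (0 : ι → ZMod q) := fun h => h i hi rfl
        simp [restr, ha, this]
      · simp [restr, evolve, ha]
    have hp : plant S (0 : JState ι τ q) = 0 := by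
      funext a j
      simp [plant]
    have h0 : l2 (0 : JState ι τ q) ^ 2 = 0 := by simp [l2_sq]
    rw [hz, hp, pow_eq_zero_iff two_ne_zero |>.1 h0]
    simp
  | succ T ih =>
    rw [Finset.sum_range_succ]
    exact (l2_plant_covers_succ idx β hV S T).trans (add_le_add ih le_rfl)

/-- On average over `S`, planting does not blow up the part of the state covering `S`. -/
theorem sum_l2_plant_covers_sq_le [DecidableEq τ] (hV : ∀ t, V t ∈ Matrix.unitaryGroup τ ℂ)
    (hv : ∑ j, ‖v j‖ ^ 2 = 1) (k : ℕ) (hk : 1 ≤ k) (T : ℕ) :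
    ∑ S ∈ powersetCard k (univ : Finset ι),
      l2 (plant S (restr (Covers S) (evolve idx β V v T))) ^ 2 ≤
      2 * (T : ℝ) ^ 2 * T.choose (k - 1) := by
  set e : ℕ → Finset ι → ℝ := fun t S => l2 (jump (Enters S) idx β (evolve idx β V v t))
  set f : ℕ → Finset ι → ℝ := fun t S => l2 (jump (Leaves S) idx β (evolve idx β V v t))
  calc _ ≤ ∑ S ∈ powersetCard k (univ : Finset ι),
        (T : ℝ) * ∑ t ∈ range T, 2 * (e t S ^ 2 + f t S ^ 2) := by
        refine Finset.sum_le_sum fun S hS => ?_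
        have hne : S.Nonempty := by
          rw [← card_pos, (mem_powersetCard.1 hS).2]
          exact hk
        refine (pow_le_pow_left₀ (l2_nonneg _) (l2_plant_covers_le idx β hV S hne T) 2).trans ?_
        refine sq_sum_le_card_mul_sum_sq.trans ?_
        rw [card_range]
        refine mul_le_mul_of_nonneg_left (Finset.sum_le_sum fun t _ => ?_) (by positivity)
        nlinarith [sq_nonneg (e t S - f t S)]
    _ = (T : ℝ) * ∑ t ∈ range T, 2 * ∑ S ∈ powersetCard k (univ : Finset ι),
          (e t S ^ 2 + f t S ^ 2) := by
        rw [← Finset.mul_sum, Finset.sum_comm]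
        simp only [Finset.mul_sum]
    _ ≤ (T : ℝ) * ∑ _t ∈ range T, 2 * (T.choose (k - 1) : ℝ) := by
        refine mul_le_mul_of_nonneg_left (Finset.sum_le_sum fun t ht => ?_) (by positivity)
        refine mul_le_mul_of_nonneg_left ?_ zero_le_two
        refine (sum_l2_jump_sq_le k t idx β _ (evolve_eq_zero idx β t)).trans ?_
        rw [l2_evolve idx β hV hv, one_pow, mul_one]
        exact_mod_cast Nat.choose_le_choose _ (mem_range.1 ht).le
    _ = 2 * (T : ℝ) ^ 2 * T.choose (k - 1) := by
        rw [Finset.sum_const, card_range, nsmul_eq_mul]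
        ring

end Evolution

/-! ### Overlaps between frequencies not covering `S` -/

section Overlaps

/-- Binomial coefficients scale at least as fast as powers. -/
lemma choose_mul_pow_le {m n : ℕ} {y : ℝ} (hy : 1 ≤ y) (h : y * m ≤ n) (j : ℕ) :
    (m.choose j : ℝ) * y ^ j ≤ n.choose j := by
  have hmn : m ≤ n := by
    have : (m : ℝ) ≤ n := by nlinarith [(Nat.cast_nonneg m : (0 : ℝ) ≤ m)]
    exact_mod_cast this
  have key : ∀ j, (m.descFactorial j : ℝ) * y ^ j ≤ n.descFactorial j := by
    intro j
    induction j with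
    | zero => simp
    | succ j ih =>
      rw [Nat.descFactorial_succ, Nat.descFactorial_succ, Nat.cast_mul, Nat.cast_mul, pow_succ]
      have h1 : ((m - j : ℕ) : ℝ) * y ≤ ((n - j : ℕ) : ℝ) := by
        rcases le_total j m with hj | hj
        · rw [Nat.cast_sub hj, Nat.cast_sub (hj.trans hmn)]
          nlinarith [(Nat.cast_nonneg j : (0 : ℝ) ≤ j)]
        · rw [Nat.sub_eq_zero_of_le hj]
          simp
      calc _ = (((m - j : ℕ) : ℝ) * y) * ((m.descFactorial j : ℝ) * y ^ j) := by ring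
        _ ≤ _ := mul_le_mul h1 ih (by positivity) (by positivity)
  have h2 := key j
  rw [Nat.descFactorial_eq_factorial_mul_choose, Nat.descFactorial_eq_factorial_mul_choose,
    Nat.cast_mul, Nat.cast_mul, mul_assoc] at h2
  exact le_of_mul_le_mul_left h2 (by exact_mod_cast Nat.factorial_pos j)

variable {ι τ : Type} {q : ℕ} [Fintype ι] [DecidableEq ι]

/-- Random `k`-sets have small exponential moments of their intersection with a small set. -/
lemma sum_pow_card_inter_le (k : ℕ) (A : Finset ι) {y : ℝ} (hy : 1 ≤ y)
    (hA : y * A.card ≤ Fintype.card ι) :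
    ∑ S ∈ powersetCard k (univ : Finset ι), y ^ (A ∩ S).card ≤
      2 ^ k * ((Fintype.card ι).choose k : ℝ) := by
  have h₁ : ∀ S : Finset ι, y ^ (A ∩ S).card ≤
      ∑ J ∈ A.powerset, if J ⊆ S then y ^ J.card else 0 := by
    intro S
    rw [← Finset.sum_filter]
    have : A.powerset.filter (fun J => J ⊆ S) = (A ∩ S).powerset := by
      ext J
      rw [mem_filter, mem_powerset, mem_powerset, subset_inter_iff]
    rw [this]
    exact Finset.single_le_sum (f := fun J : Finset ι => y ^ J.card)
      (fun J _ => by positivity) (mem_powerset_self _)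
  have h₂ : ∀ J : Finset ι, (((powersetCard k (univ : Finset ι)).filter
      fun S => J ⊆ S).card : ℝ) ≤ ((Fintype.card ι - J.card).choose (k - J.card) : ℝ) ∧
      (k < J.card → (((powersetCard k (univ : Finset ι)).filter fun S => J ⊆ S).card : ℝ) = 0) := by
    intro J
    constructor
    · have : ((powersetCard k (univ : Finset ι)).filter fun S => J ⊆ S).card ≤
          (powersetCard (k - J.card) (univ \ J)).card := by
        refine Finset.card_le_card_of_injOn (fun S => S \ J) ?_ ?_
        · intro S hS
          simp only [coe_filter, Set.mem_ofPred_eq, mem_powersetCard, subset_univ, true_and] at hS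
          rw [mem_coe, mem_powersetCard, card_sdiff_of_subset hS.2, hS.1]
          exact ⟨sdiff_subset_sdiff (subset_univ _) le_rfl, rfl⟩
        · intro S hS S' hS' h
          simp only [coe_filter, Set.mem_ofPred_eq] at hS hS'
          rw [← sdiff_union_of_subset hS.2, ← sdiff_union_of_subset hS'.2]
          exact congrArg (· ∪ J) h
      rw [card_powersetCard, card_sdiff_of_subset (subset_univ _), card_univ] at this
      exact_mod_cast this
    · intro hJ
      rw [Nat.cast_eq_zero, card_eq_zero, filter_eq_empty_iff]
      intro S hS hJS
      have := card_le_card hJS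
      rw [(mem_powersetCard.1 hS).2] at this
      omega
  calc _ ≤ ∑ S ∈ powersetCard k (univ : Finset ι),
        ∑ J ∈ A.powerset, (if J ⊆ S then y ^ J.card else 0) := sum_le_sum fun S _ => h₁ S
    _ = ∑ J ∈ A.powerset, (((powersetCard k (univ : Finset ι)).filter
          fun S => J ⊆ S).card : ℝ) * y ^ J.card := by
        rw [Finset.sum_comm]
        refine Finset.sum_congr rfl fun J _ => ?_
        rw [← Finset.sum_filter, Finset.sum_const, nsmul_eq_mul]
    _ ≤ ∑ J ∈ A.powerset, (if J.card ≤ k then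
          ((Fintype.card ι - J.card).choose (k - J.card) : ℝ) * y ^ J.card else 0) := by
        refine Finset.sum_le_sum fun J _ => ?_
        split_ifs with hJ
        · exact mul_le_mul_of_nonneg_right (h₂ J).1 (by positivity)
        · rw [(h₂ J).2 (not_le.1 hJ), zero_mul]
    _ = ∑ m ∈ range (A.card + 1), (A.card.choose m : ℝ) * (if m ≤ k then
          ((Fintype.card ι - m).choose (k - m) : ℝ) * y ^ m else 0) := by
        rw [Finset.sum_powerset_apply_card (fun m => if m ≤ k then
          ((Fintype.card ι - m).choose (k - m) : ℝ) * y ^ m else 0)]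
        simp only [nsmul_eq_mul]
    _ ≤ ∑ m ∈ range (A.card + 1), ((Fintype.card ι).choose k : ℝ) * k.choose m := by
        refine Finset.sum_le_sum fun m _ => ?_
        split_ifs with hm
        · have h3 : ((Fintype.card ι).choose k : ℝ) * k.choose m =
              (Fintype.card ι).choose m * (Fintype.card ι - m).choose (k - m) := by
            exact_mod_cast Nat.choose_mul hm
          rw [h3]
          calc _ = ((A.card.choose m : ℝ) * y ^ m) *
                ((Fintype.card ι - m).choose (k - m) : ℝ) := by ring
            _ ≤ _ := mul_le_mul_of_nonneg_right (choose_mul_pow_le hy hA m) (by positivity)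
        · rw [mul_zero]
          positivity
    _ ≤ 2 ^ k * ((Fintype.card ι).choose k : ℝ) := by
        rw [← Finset.mul_sum, mul_comm]
        refine mul_le_mul_of_nonneg_right ?_ (by positivity)
        have h4 : ∑ m ∈ range (A.card + 1), k.choose m ≤ 2 ^ k := by
          rw [← Nat.sum_range_choose]
          calc _ ≤ ∑ m ∈ range (max (A.card + 1) (k + 1)), k.choose m :=
                Finset.sum_le_sum_of_subset (range_subset_range.2 (le_max_left _ _))
            _ = _ := by
                refine (Finset.sum_subset (range_subset_range.2 (le_max_right _ _)) ?_).symm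
                intro m _ hm
                exact Nat.choose_eq_zero_of_lt (by simpa using hm)
        exact_mod_cast h4

variable [Fintype τ] [NeZero q]

/-- Planting nearly preserves the norm of the part of the state not covering `S`. -/
lemma l2_plant_not_covers_sq_le (S : Finset ι) (φ : JState ι τ q) {z : ℝ} (hz : 1 ≤ z) :
    l2 (plant S (restr (fun a => ¬ Covers S a) φ)) ^ 2 ≤
      l2 φ ^ 2 + (S.card : ℝ) * ∑ a, ∑ j,
        (z ^ 2) ^ (supp a ∩ S).card / z ^ S.card * ‖φ a j‖ ^ 2 := by
  classical
  set g : JState ι τ q := restr (fun a => ¬ Covers S a) φ with hg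
  set w : (ι → ZMod q) → ℝ := fun a => (z ^ 2) ^ (supp a ∩ S).card / z ^ S.card with hw
  have hz0 : 0 < z := by linarith
  have w_pos : ∀ a, 0 < w a := fun a => by positivity
  have g_le : ∀ a j, ‖g a j‖ ^ 2 ≤ ‖φ a j‖ ^ 2 := by
    intro a j
    by_cases h : Covers S a <;> simp [hg, restr, h]
  have w_mul : ∀ a (c : ZMod q), c ≠ 0 → 1 ≤ w a * w (a + constOn S c) := by
    intro a c hc
    have hcard : S.card ≤ (supp a ∩ S).card + (supp (a + constOn S c) ∩ S).card := by
      refine (card_le_card ?_).trans (card_union_le _ _)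
      intro i hi
      rw [mem_union, mem_inter, mem_inter, mem_supp, mem_supp]
      by_cases h : a i = 0
      · right
        exact ⟨by simp [h, constOn, hi, hc], hi⟩
      · exact Or.inl ⟨h, hi⟩
    simp only [hw]
    rw [div_mul_div_comm, one_le_div (by positivity), ← pow_add, ← pow_add, ← pow_mul]
    exact pow_le_pow_right₀ hz (by omega)
  -- the number of other noncovering frequencies in a coset
  have count : ∀ a, ((univ.filter fun c : ZMod q =>
      c ≠ 0 ∧ ¬ Covers S (a + constOn S c)).card : ℝ) ≤ S.card := by
    intro a
    have : (univ.filter fun c : ZMod q => c ≠ 0 ∧ ¬ Covers S (a + constOn S c)) ⊆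
        S.image fun i => - a i := by
      intro c hc
      simp only [mem_filter, mem_univ, true_and, Covers, not_forall, not_not] at hc
      obtain ⟨_, i, hi, h⟩ := hc
      rw [mem_image]
      refine ⟨i, hi, ?_⟩
      simp only [Pi.add_apply, constOn, hi, if_true] at h
      exact (eq_neg_of_add_eq_zero_right h).symm
    exact_mod_cast (card_le_card this).trans card_image_le
  have pair : ∀ (c : ZMod q), c ≠ 0 → ∀ a j, ‖g a j * star (g (a + constOn S c) j)‖ ≤
      (1 / 2) * (if ¬ Covers S (a + constOn S c) then w a * ‖g a j‖ ^ 2 else 0) +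
      (1 / 2) * (if ¬ Covers S (a + constOn S c - constOn S c) then
        w (a + constOn S c) * ‖g (a + constOn S c) j‖ ^ 2 else 0) := by
    intro c hc a j
    rw [add_sub_cancel_right, norm_mul, norm_star]
    by_cases h₁ : Covers S a
    · have : g a j = 0 := by simp [hg, restr, h₁]
      simp [this, h₁]
    by_cases h₂ : Covers S (a + constOn S c)
    · have : g (a + constOn S c) j = 0 := by simp [hg, restr, h₂]
      simp [this, h₂]
    simp only [h₁, h₂, not_false_eq_true, if_true]
    set x := ‖g a j‖
    set y := ‖g (a + constOn S c) j‖
    have hx : 0 ≤ x := norm_nonneg _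
    have hy : 0 ≤ y := norm_nonneg _
    have hw1 := w_mul a c hc
    have p1 := w_pos a
    have p2 := w_pos (a + constOn S c)
    set u := w a
    set u' := w (a + constOn S c)
    have h3 : (x * y) ^ 2 ≤ ((1 / 2) * (u * x ^ 2) + (1 / 2) * (u' * y ^ 2)) ^ 2 := by
      nlinarith [sq_nonneg (u * x ^ 2 - u' * y ^ 2), mul_le_mul_of_nonneg_right hw1
        (by positivity : 0 ≤ x ^ 2 * y ^ 2)]
    exact (pow_le_pow_iff_left₀ (by positivity) (by positivity) two_ne_zero).1 h3
  have single : ∀ c : ZMod q, c ≠ 0 → ‖∑ a, ∑ j, g a j * star (g (a + constOn S c) j)‖ ≤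
      (1 / 2) * (∑ a, ∑ j, if ¬ Covers S (a + constOn S c) then w a * ‖g a j‖ ^ 2 else 0) +
      (1 / 2) * (∑ a, ∑ j, if ¬ Covers S (a + constOn S (-c)) then
        w a * ‖g a j‖ ^ 2 else 0) := by
    intro c hc
    refine (norm_sum_le _ _).trans ((Finset.sum_le_sum fun a _ =>
      (norm_sum_le _ _).trans (Finset.sum_le_sum fun j _ => pair c hc a j)).trans ?_)
    simp only [Finset.sum_add_distrib, ← Finset.mul_sum]
    refine le_of_eq ?_
    congr 2
    rw [← Equiv.sum_comp (Equiv.addRight (constOn S c)) fun a : ι → ZMod q => ∑ j,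
      if ¬ Covers S (a + constOn S (-c)) then w a * ‖g a j‖ ^ 2 else 0]
    simp only [Equiv.coe_addRight, constOn_neg, sub_eq_add_neg]
  have total : ∑ c ∈ univ.erase (0 : ZMod q), ∑ a, ∑ j,
      (if ¬ Covers S (a + constOn S c) then w a * ‖g a j‖ ^ 2 else 0) ≤
      (S.card : ℝ) * ∑ a, ∑ j, w a * ‖φ a j‖ ^ 2 := by
    rw [Finset.sum_comm, Finset.mul_sum]
    refine Finset.sum_le_sum fun a _ => ?_
    rw [Finset.sum_comm, Finset.mul_sum]
    refine Finset.sum_le_sum fun j _ => ?_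
    rw [← Finset.sum_filter, Finset.sum_const, nsmul_eq_mul]
    refine mul_le_mul (le_trans (le_of_eq ?_) (count a))
      (mul_le_mul_of_nonneg_left (g_le a j) (w_pos a).le)
      (mul_nonneg (w_pos a).le (by positivity)) (by positivity)
    congr 2
    ext c
    simp
  have total' : ∑ c ∈ univ.erase (0 : ZMod q), ∑ a, ∑ j,
      (if ¬ Covers S (a + constOn S (-c)) then w a * ‖g a j‖ ^ 2 else 0) ≤
      (S.card : ℝ) * ∑ a, ∑ j, w a * ‖φ a j‖ ^ 2 := by
    refine le_trans (le_of_eq ?_) total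
    refine Finset.sum_bij (fun c _ => -c) ?_ ?_ ?_ ?_
    · intro c hc
      simpa using hc
    · intro c _ d _ h
      exact neg_injective h
    · intro c hc
      exact ⟨-c, by simpa using hc, neg_neg c⟩
    · intro c _
      rfl
  have main : ((l2 (plant S g) ^ 2 : ℝ) : ℂ) = ((l2 g ^ 2 : ℝ) : ℂ) +
      ∑ c ∈ univ.erase (0 : ZMod q), ∑ a, ∑ j, g a j * star (g (a + constOn S c) j) := by
    rw [l2_plant_sq, ← Finset.add_sum_erase _ _ (mem_univ (0 : ZMod q))]
    congr 1
    rw [l2_sq, Complex.ofReal_sum]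
    refine Finset.sum_congr rfl fun a _ => ?_
    rw [Complex.ofReal_sum]
    refine Finset.sum_congr rfl fun j _ => ?_
    rw [constOn_zero, add_zero, RCLike.star_def, RCLike.mul_conj]
    simp
  have hre := congrArg Complex.re main
  rw [Complex.add_re, Complex.ofReal_re, Complex.ofReal_re] at hre
  rw [hre]
  refine add_le_add (l2_restr_sq_le _ _) ?_
  refine (Complex.re_le_norm _).trans ((norm_sum_le _ _).trans ?_)
  refine (Finset.sum_le_sum fun c hc => single c (ne_of_mem_erase hc)).trans ?_
  rw [Finset.sum_add_distrib, ← Finset.mul_sum, ← Finset.mul_sum]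
  linarith

/-- Averaged over `S`, planting nearly preserves the norm of the noncovering part. -/
theorem sum_l2_plant_not_covers_sq_le (k T : ℕ) (φ : JState ι τ q)
    (hφ : ∀ a, T < (supp a).card → φ a = 0) (hT : 1024 * T ≤ Fintype.card ι) :
    ∑ S ∈ powersetCard k (univ : Finset ι),
      l2 (plant S (restr (fun a => ¬ Covers S a) φ)) ^ 2 ≤
      ((Fintype.card ι).choose k : ℝ) * ((1 + 1 / 16) * l2 φ ^ 2) := by
  have hk16 : (k : ℝ) * 2 ^ k / 32 ^ k ≤ 1 / 16 := by
    have h1 : (k : ℝ) * 16 ≤ 16 ^ k := by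
      rcases Nat.eq_zero_or_pos k with rfl | hk
      · simp
      obtain ⟨m, rfl⟩ : ∃ m, k = m + 1 := ⟨k - 1, by omega⟩
      have h2 : m + 1 ≤ 16 ^ m := Nat.lt_pow_self (by norm_num)
      have h3 : ((m + 1 : ℕ) : ℝ) ≤ 16 ^ m := by exact_mod_cast h2
      rw [pow_succ]
      linarith
    have h2 : (32 : ℝ) ^ k = 16 ^ k * 2 ^ k := by
      rw [← mul_pow]
      norm_num
    rw [h2, div_le_div_iff₀ (by positivity) (by norm_num)]
    nlinarith [pow_pos (two_pos : (0 : ℝ) < 2) k]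
  calc _ ≤ ∑ S ∈ powersetCard k (univ : Finset ι), (l2 φ ^ 2 + (k : ℝ) * ∑ a, ∑ j,
        ((32 : ℝ) ^ 2) ^ (supp a ∩ S).card / 32 ^ k * ‖φ a j‖ ^ 2) := by
        refine Finset.sum_le_sum fun S hS => ?_
        have := l2_plant_not_covers_sq_le S φ (z := 32) (by norm_num)
        rwa [(mem_powersetCard.1 hS).2] at this
    _ = ((Fintype.card ι).choose k : ℝ) * l2 φ ^ 2 + (k : ℝ) * ∑ a, ∑ j,
          (∑ S ∈ powersetCard k (univ : Finset ι), ((32 : ℝ) ^ 2) ^ (supp a ∩ S).card) /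
            32 ^ k * ‖φ a j‖ ^ 2 := by
        rw [Finset.sum_add_distrib, Finset.sum_const, card_powersetCard, card_univ, nsmul_eq_mul,
          ← Finset.mul_sum, Finset.sum_comm]
        congr 2
        refine Finset.sum_congr rfl fun a _ => ?_
        rw [Finset.sum_comm]
        refine Finset.sum_congr rfl fun j _ => ?_
        rw [Finset.sum_div, Finset.sum_mul]
    _ ≤ ((Fintype.card ι).choose k : ℝ) * l2 φ ^ 2 + (k : ℝ) * ∑ a, ∑ j,
          (2 ^ k * ((Fintype.card ι).choose k : ℝ)) / 32 ^ k * ‖φ a j‖ ^ 2 := by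
        refine add_le_add le_rfl (mul_le_mul_of_nonneg_left ?_ (by positivity))
        refine Finset.sum_le_sum fun a _ => Finset.sum_le_sum fun j _ => ?_
        by_cases ha : (supp a).card ≤ T
        · refine mul_le_mul_of_nonneg_right ?_ (by positivity)
          refine div_le_div_of_nonneg_right ?_ (by positivity)
          refine sum_pow_card_inter_le k (supp a) (by norm_num) ?_
          have h1 : 1024 * (supp a).card ≤ Fintype.card ι := by omega
          norm_num
          exact_mod_cast h1
        · simp [hφ a (not_le.1 ha)]
    _ = ((Fintype.card ι).choose k : ℝ) * l2 φ ^ 2 + ((k : ℝ) * 2 ^ k / 32 ^ k) *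
          (((Fintype.card ι).choose k : ℝ) * l2 φ ^ 2) := by
        simp only [← Finset.mul_sum]
        rw [← l2_sq]
        ring
    _ ≤ ((Fintype.card ι).choose k : ℝ) * l2 φ ^ 2 + (1 / 16) *
          (((Fintype.card ι).choose k : ℝ) * l2 φ ^ 2) :=
        add_le_add le_rfl (mul_le_mul_of_nonneg_right hk16 (by positivity))
    _ = _ := by ring

end Overlaps

/-! ### From joint states back to inputs -/

section Amplitudes

variable {ι τ : Type} {q : ℕ} [Fintype ι] [DecidableEq ι] [Fintype τ] [NeZero q]

/-- The state of the algorithm register on input `x`. -/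
noncomputable def amp (φ : JState ι τ q) (x : ι → ZMod q) : τ → ℂ :=
  fun j => ∑ a : ι → ZMod q, ZMod.stdAddChar (a ⬝ᵥ x) * φ a j

/-- The phase oracle for input `x`. -/
noncomputable def phaseOracle [DecidableEq τ] (idx : τ → ι) (β : τ → ZMod q) (x : ι → ZMod q) :
    Matrix τ τ ℂ :=
  Matrix.diagonal fun j => ZMod.stdAddChar (β j * x (idx j))

lemma amp_act (M : Matrix τ τ ℂ) (φ : JState ι τ q) (x : ι → ZMod q) :
    amp (act M φ) x = M *ᵥ amp φ x := by
  funext j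
  simp only [amp, act, mulVec, dotProduct, Finset.mul_sum]
  rw [Finset.sum_comm]
  exact Finset.sum_congr rfl fun j' _ => Finset.sum_congr rfl fun a _ => by ring

lemma amp_shift [DecidableEq τ] (idx : τ → ι) (β : τ → ZMod q) (φ : JState ι τ q)
    (x : ι → ZMod q) : amp (shift idx β φ) x = phaseOracle idx β x *ᵥ amp φ x := by
  funext j
  rw [phaseOracle, mulVec_diagonal, amp, amp, Finset.mul_sum,
    ← Equiv.sum_comp (Equiv.addRight (Pi.single (idx j) (β j)))]
  refine Finset.sum_congr rfl fun a _ => ?_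
  simp only [Equiv.coe_addRight, shift, add_sub_cancel_right, add_dotProduct,
    single_dotProduct, AddChar.map_add_eq_mul]
  ring

lemma amp_evolve [DecidableEq τ] (idx : τ → ι) (β : τ → ZMod q) (V : ℕ → Matrix τ τ ℂ)
    (v : τ → ℂ) (x : ι → ZMod q) (t : ℕ) :
    amp (evolve idx β V v t) x = qProd V (phaseOracle idx β x) t *ᵥ v := by
  induction t with
  | zero =>
    funext j
    rw [amp, Finset.sum_eq_single 0]
    · simp [evolve, qProd]
    · intro a _ ha
      simp [evolve, ha]
    · simp
  | succ t ih =>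
    rw [evolve, amp_act, amp_shift, ih, qProd, mulVec_mulVec, mulVec_mulVec, Matrix.mul_assoc]

lemma map_sum_eq_prod {A κ : Type*} [AddCommMonoid A] (χ : AddChar A ℂ) (s : Finset κ)
    (f : κ → A) : χ (∑ i ∈ s, f i) = ∏ i ∈ s, χ (f i) := by
  classical
  induction s using Finset.induction_on with
  | empty => simp
  | insert i s hi ih => rw [Finset.sum_insert hi, Finset.prod_insert hi, AddChar.map_add_eq_mul, ih]

lemma sum_stdAddChar_dotProduct (e : ι → ZMod q) :
    ∑ x : ι → ZMod q, (ZMod.stdAddChar (e ⬝ᵥ x) : ℂ) =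
      if e = 0 then (Fintype.card (ι → ZMod q) : ℂ) else 0 := by
  have h1 : ∀ x : ι → ZMod q, (ZMod.stdAddChar (e ⬝ᵥ x) : ℂ) =
      ∏ i, (ZMod.stdAddChar (x i * e i) : ℂ) := by
    intro x
    rw [dotProduct, map_sum_eq_prod]
    exact Finset.prod_congr rfl fun i _ => by rw [mul_comm]
  have h2 : ∏ i, ∑ b : ZMod q, (ZMod.stdAddChar (b * e i) : ℂ) =
      ∑ x : ι → ZMod q, ∏ i, (ZMod.stdAddChar (x i * e i) : ℂ) := by
    rw [Finset.prod_univ_sum, Fintype.piFinset_univ]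
  rw [Finset.sum_congr rfl fun x _ => h1 x, ← h2]
  simp only [AddChar.sum_mulShift _ (ZMod.isPrimitive_stdAddChar q)]
  split_ifs with he
  · subst he
    simp
  · obtain ⟨i, hi⟩ := Function.ne_iff.1 he
    exact Finset.prod_eq_zero (mem_univ i) (by rw [if_neg (by simpa using hi), Nat.cast_zero])

lemma star_stdAddChar (b : ZMod q) :
    star (ZMod.stdAddChar b : ℂ) = ZMod.stdAddChar (-b) := by
  rw [AddChar.map_neg_eq_conj]
  rfl

lemma sum_twisted_norm_amp_sq (φ : JState ι τ q) (d : ι → ZMod q) (j : τ) :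
    ∑ x : ι → ZMod q, (ZMod.stdAddChar (d ⬝ᵥ x) : ℂ) * ((‖amp φ x j‖ ^ 2 : ℝ) : ℂ) =
      (Fintype.card (ι → ZMod q) : ℂ) * ∑ a, φ a j * star (φ (a + d) j) := by
  have h2 : ∀ z : ℂ, ((‖z‖ ^ 2 : ℝ) : ℂ) = z * star z := by
    intro z
    rw [RCLike.star_def, RCLike.mul_conj]
    simp
  have h1 : ∀ x : ι → ZMod q,
      (ZMod.stdAddChar (d ⬝ᵥ x) : ℂ) * ((‖amp φ x j‖ ^ 2 : ℝ) : ℂ) =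
      ∑ a : ι → ZMod q, ∑ b : ι → ZMod q,
        (φ a j * star (φ b j)) * (ZMod.stdAddChar ((d + a - b) ⬝ᵥ x) : ℂ) := by
    intro x
    rw [h2, amp, star_sum, Finset.sum_mul_sum, Finset.mul_sum]
    refine Finset.sum_congr rfl fun a _ => ?_
    rw [Finset.mul_sum]
    refine Finset.sum_congr rfl fun b _ => ?_
    rw [star_mul', star_stdAddChar, sub_dotProduct, add_dotProduct, sub_eq_add_neg,
      AddChar.map_add_eq_mul, AddChar.map_add_eq_mul]
    ring
  rw [Finset.sum_congr rfl fun x _ => h1 x, Finset.sum_comm, Finset.mul_sum]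
  refine Finset.sum_congr rfl fun a _ => ?_
  rw [Finset.sum_comm]
  simp only [← Finset.mul_sum, sum_stdAddChar_dotProduct]
  rw [Finset.sum_eq_single (a + d)]
  · rw [if_pos (by rw [add_comm, sub_self])]
    ring
  · intro b _ hb
    rw [if_neg, mul_zero]
    intro h
    exact hb (by rw [add_comm, sub_eq_zero.1 h])
  · simp

/-- Parseval's identity. -/
lemma card_mul_l2_sq (φ : JState ι τ q) :
    (Fintype.card (ι → ZMod q) : ℝ) * l2 φ ^ 2 = ∑ x, ∑ j, ‖amp φ x j‖ ^ 2 := by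
  apply Complex.ofReal_injective
  have h := fun j => sum_twisted_norm_amp_sq φ 0 j
  simp only [zero_dotProduct, AddChar.map_zero_eq_one, one_mul, add_zero] at h
  rw [Finset.sum_comm, Complex.ofReal_sum]
  simp only [Complex.ofReal_sum]
  rw [Finset.sum_congr rfl fun j _ => h j, ← Finset.mul_sum, Complex.ofReal_mul, l2_sq,
    Finset.sum_comm]
  simp only [Complex.ofReal_sum, RCLike.star_def, RCLike.mul_conj]
  simp

lemma sum_stdAddChar_constOn (S : Finset ι) (x : ι → ZMod q) :
    ∑ c : ZMod q, (ZMod.stdAddChar (constOn S c ⬝ᵥ x) : ℂ) =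
      if ∑ i ∈ S, x i = 0 then (q : ℂ) else 0 := by
  have h : ∀ c : ZMod q, constOn S c ⬝ᵥ x = c * ∑ i ∈ S, x i := by
    intro c
    simp [constOn, dotProduct, Finset.mul_sum, ite_mul, Finset.sum_ite_mem]
  simp only [h, AddChar.sum_mulShift _ (ZMod.isPrimitive_stdAddChar q), ZMod.card]
  split_ifs <;> simp

/-- Parseval's identity for planted states. -/
lemma card_mul_l2_plant_sq (S : Finset ι) (φ : JState ι τ q) :
    (Fintype.card (ι → ZMod q) : ℝ) * l2 (plant S φ) ^ 2 =
      q * ∑ x : ι → ZMod q, if ∑ i ∈ S, x i = 0 then ∑ j, ‖amp φ x j‖ ^ 2 else 0 := by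
  apply Complex.ofReal_injective
  have h1 : ∀ x : ι → ZMod q,
      (((q : ℝ) * if ∑ i ∈ S, x i = 0 then ∑ j, ‖amp φ x j‖ ^ 2 else 0 : ℝ) : ℂ) =
      ∑ c : ZMod q, ∑ j, (ZMod.stdAddChar (constOn S c ⬝ᵥ x) : ℂ) *
        ((‖amp φ x j‖ ^ 2 : ℝ) : ℂ) := by
    intro x
    rw [Finset.sum_comm]
    simp only [← Finset.sum_mul, sum_stdAddChar_constOn, ← Finset.mul_sum]
    split_ifs <;> simp
  rw [Finset.mul_sum, Complex.ofReal_sum, Finset.sum_congr rfl fun x _ => h1 x, Finset.sum_comm,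
    Complex.ofReal_mul, l2_plant_sq, Finset.mul_sum]
  refine Finset.sum_congr rfl fun c _ => ?_
  rw [Finset.sum_comm, Finset.sum_comm (s := (univ : Finset (ι → ZMod q))), Finset.mul_sum]
  refine Finset.sum_congr rfl fun j _ => ?_
  rw [sum_twisted_norm_amp_sq]
  simp

/-- The inputs whose sum over the nonempty set `S` vanishes make up a `1 / q` fraction. -/
lemma card_sum_eq_zero (S : Finset ι) (hS : S.Nonempty) :
    (q : ℝ) * (univ.filter fun x : ι → ZMod q => ∑ i ∈ S, x i = 0).card =
      Fintype.card (ι → ZMod q) := by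
  apply Complex.ofReal_injective
  obtain ⟨i, hi⟩ := hS
  have h0 : ∀ c : ZMod q, constOn S c = 0 ↔ c = 0 := by
    intro c
    constructor
    · intro h
      simpa [constOn, hi] using congrFun h i
    · rintro rfl
      exact constOn_zero S
  have h : ∑ x : ι → ZMod q, ∑ c : ZMod q, (ZMod.stdAddChar (constOn S c ⬝ᵥ x) : ℂ) =
      (Fintype.card (ι → ZMod q) : ℂ) := by
    rw [Finset.sum_comm]
    simp only [sum_stdAddChar_dotProduct, h0]
    simp
  simp only [sum_stdAddChar_constOn] at h
  rw [← Finset.sum_filter, Finset.sum_const, nsmul_eq_mul] at h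
  simp only [Complex.ofReal_mul, Complex.ofReal_natCast]
  rw [mul_comm, h]

/-- The success probabilities of a phase query algorithm on uniform inputs and on inputs with a
planted zero-sum `k`-set are close. -/
theorem planted_sum_le [DecidableEq τ] (idx : τ → ι) (β : τ → ZMod q) {V : ℕ → Matrix τ τ ℂ}
    {v : τ → ℂ} (hV : ∀ t, V t ∈ Matrix.unitaryGroup τ ℂ) (hv : ∑ j, ‖v j‖ ^ 2 = 1)
    {K : Matrix τ τ ℂ} (hK : ∀ w : τ → ℂ, ∑ j, ‖(K *ᵥ w) j‖ ^ 2 ≤ ∑ j, ‖w j‖ ^ 2)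
    {k T : ℕ} (hk : 1 ≤ k) (hT : 1024 * T ≤ Fintype.card ι) {p : (ι → ZMod q) → ℝ}
    (hp : ∀ x, p x = ∑ j, ‖(K *ᵥ (qProd V (phaseOracle idx β x) T *ᵥ v)) j‖ ^ 2) :
    ∑ S ∈ powersetCard k (univ : Finset ι),
        (q : ℝ) * ∑ x : ι → ZMod q, (if ∑ i ∈ S, x i = 0 then p x else 0) ≤
      ((Fintype.card ι).choose k : ℝ) * ∑ x, p x +
      (Fintype.card (ι → ZMod q) : ℝ) *
        ((81 / 1024) * ((Fintype.card ι).choose k : ℝ) + 130 * (T : ℝ) ^ 2 * T.choose (k - 1)) := by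
  set φ := evolve idx β V v T with hφ
  set ψ := act K φ with hψ
  set N : ℝ := (Fintype.card (ι → ZMod q) : ℝ) with hN
  have l2_act_le : ∀ χ : JState ι τ q, l2 (act K χ) ^ 2 ≤ l2 χ ^ 2 := by
    intro χ
    rw [l2_sq, l2_sq]
    exact Finset.sum_le_sum fun a _ => hK _
  have hpx : ∀ x, p x = ∑ j, ‖amp ψ x j‖ ^ 2 := by
    intro x
    rw [hp, hψ, amp_act, hφ, amp_evolve]
  have hψ0 : ∀ a, T < (supp a).card → ψ a = 0 := by
    intro a ha
    rw [hψ, act, hφ, evolve_eq_zero idx β T a ha, mulVec_zero]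
  have hψ1 : l2 ψ ^ 2 ≤ 1 := by
    refine (l2_act_le φ).trans ?_
    rw [hφ, l2_evolve idx β hV hv, one_pow]
  have hS : ∀ S : Finset ι, l2 (plant S ψ) ^ 2 ≤
      (65 / 64) * l2 (plant S (restr (fun a => ¬ Covers S a) ψ)) ^ 2 +
      65 * l2 (plant S (restr (Covers S) φ)) ^ 2 := by
    intro S
    have h1 : l2 (plant S ψ) ≤ l2 (plant S (restr (Covers S) ψ)) +
        l2 (plant S (restr (fun a => ¬ Covers S a) ψ)) := by
      conv_lhs => rw [← restr_add_restr_not (Covers S) ψ, plant_add]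
      exact l2_add_le _ _
    have h2 : l2 (plant S (restr (Covers S) ψ)) ^ 2 ≤
        l2 (plant S (restr (Covers S) φ)) ^ 2 := by
      rw [hψ, restr_act, plant_act]
      exact l2_act_le _
    have h3 := pow_le_pow_left₀ (l2_nonneg _) h1 2
    nlinarith [sq_nonneg (l2 (plant S (restr (fun a => ¬ Covers S a) ψ)) -
      64 * l2 (plant S (restr (Covers S) ψ)))]
  have h1 := sum_l2_plant_covers_sq_le idx β hV hv k hk T
  have h2 := sum_l2_plant_not_covers_sq_le k T ψ hψ0 hT
  have h3 : ∑ S ∈ powersetCard k (univ : Finset ι), l2 (plant S ψ) ^ 2 ≤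
      ((Fintype.card ι).choose k : ℝ) * l2 ψ ^ 2 +
      ((81 / 1024) * ((Fintype.card ι).choose k : ℝ) +
        130 * (T : ℝ) ^ 2 * T.choose (k - 1)) := by
    refine (Finset.sum_le_sum fun S _ => hS S).trans ?_
    rw [Finset.sum_add_distrib, ← Finset.mul_sum, ← Finset.mul_sum]
    have h4 : ((Fintype.card ι).choose k : ℝ) * l2 ψ ^ 2 ≤ (Fintype.card ι).choose k :=
      mul_le_of_le_one_right (by positivity) hψ1
    linarith
  have hN0 : 0 ≤ N := by positivity
  calc _ = N * ∑ S ∈ powersetCard k (univ : Finset ι), l2 (plant S ψ) ^ 2 := by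
        rw [Finset.mul_sum]
        refine Finset.sum_congr rfl fun S _ => ?_
        rw [hN, card_mul_l2_plant_sq]
        simp only [hpx]
    _ ≤ _ := mul_le_mul_of_nonneg_left h3 hN0
    _ = _ := by
        simp only [hpx]
        rw [← card_mul_l2_sq, ← hN]
        ring

end Amplitudes

/-! ### From standard queries to phase queries -/

section Fourier

variable {ι : Type} {q : ℕ} [Fintype ι] [DecidableEq ι] [NeZero q]

/-- An input with numbers in `ZMod q`, as an input of a query algorithm. -/
def toInput (x : ι → ZMod q) : Input ι (fun _ => q) := fun i => (ZMod.finEquiv q).symm (x i)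

/-- The position queried by a basis state. -/
def queryPos {W : ℕ} (j : QIdx ι (fun _ => q) W) : ι := j.1.1

/-- The content of the answer register of a basis state. -/
def queryVal {W : ℕ} (j : QIdx ι (fun _ => q) W) : ZMod q := ZMod.finEquiv q j.1.2

/-- The Fourier transform of the answer register. -/
noncomputable def fourier (ι : Type) (q : ℕ) [DecidableEq ι] [NeZero q] (W : ℕ) :
    Matrix (QIdx ι (fun _ => q) W) (QIdx ι (fun _ => q) W) ℂ :=
  Matrix.of fun j j' => if j.1.1 = j'.1.1 ∧ j.2 = j'.2 then
    ((Real.sqrt q : ℝ) : ℂ)⁻¹ * ZMod.stdAddChar (queryVal j * queryVal j') else 0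

lemma sum_queryRegister {W : ℕ} (f : QIdx ι (fun _ => q) W → ℂ) :
    ∑ j, f j = ∑ i : ι, ∑ w : Fin W, ∑ b : ZMod q, f (⟨i, (ZMod.finEquiv q).symm b⟩, w) := by
  rw [Fintype.sum_prod_type, Fintype.sum_sigma]
  refine Finset.sum_congr rfl fun i _ => ?_
  rw [Finset.sum_comm]
  refine Finset.sum_congr rfl fun w _ => ?_
  exact (Equiv.sum_comp (ZMod.finEquiv q).symm.toEquiv fun b => f (⟨i, b⟩, w)).symm

lemma queryRegister_ext {W : ℕ} {j j' : QIdx ι (fun _ => q) W} (h1 : j.1.1 = j'.1.1)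
    (h2 : j.2 = j'.2) (h3 : queryVal j = queryVal j') : j = j' := by
  obtain ⟨⟨i, b⟩, w⟩ := j
  obtain ⟨⟨i', b'⟩, w'⟩ := j'
  obtain rfl : i = i' := h1
  obtain rfl : w = w' := h2
  obtain rfl : b = b' := (ZMod.finEquiv q).injective h3
  rfl

lemma inv_sqrt_mul_inv_sqrt :
    ((Real.sqrt q : ℝ) : ℂ)⁻¹ * ((Real.sqrt q : ℝ) : ℂ)⁻¹ = (q : ℂ)⁻¹ := by
  rw [← mul_inv, ← Complex.ofReal_mul, Real.mul_self_sqrt (Nat.cast_nonneg q),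
    Complex.ofReal_natCast]

lemma fourier_mem_unitaryGroup (W : ℕ) :
    fourier ι q W ∈ Matrix.unitaryGroup (QIdx ι (fun _ => q) W) ℂ := by
  have hq : (q : ℂ) ≠ 0 := Nat.cast_ne_zero.2 (NeZero.ne q)
  rw [Matrix.mem_unitaryGroup_iff]
  ext j j'
  rw [mul_apply, sum_queryRegister, Finset.sum_eq_single j.1.1, Finset.sum_eq_single j.2]
  · by_cases h : j'.1.1 = j.1.1 ∧ j'.2 = j.2
    · have h1 : ∀ b : ZMod q, fourier ι q W j (⟨j.1.1, (ZMod.finEquiv q).symm b⟩, j.2) *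
          star (fourier ι q W) (⟨j.1.1, (ZMod.finEquiv q).symm b⟩, j.2) j' =
          (q : ℂ)⁻¹ * ZMod.stdAddChar (b * (queryVal j - queryVal j')) := by
        intro b
        rw [star_apply, fourier, of_apply, of_apply, if_pos ⟨rfl, rfl⟩, if_pos h, star_mul',
          star_stdAddChar, mul_mul_mul_comm, ← AddChar.map_add_eq_mul, ← inv_sqrt_mul_inv_sqrt]
        congr 2
        · rw [RCLike.star_def, map_inv₀, Complex.conj_ofReal]
        · simp only [queryVal, RingEquiv.apply_symm_apply]
          ring
      simp only [h1, ← Finset.mul_sum]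
      rw [AddChar.sum_mulShift _ (ZMod.isPrimitive_stdAddChar q), ZMod.card, one_apply]
      by_cases hv : queryVal j = queryVal j'
      · rw [if_pos (sub_eq_zero.2 hv), if_pos (queryRegister_ext h.1.symm h.2.symm hv),
          inv_mul_cancel₀ hq]
      · rw [if_neg (mt sub_eq_zero.1 hv), if_neg (fun hj => hv (congrArg _ hj)), Nat.cast_zero,
          mul_zero]
    · rw [one_apply_ne (by rintro rfl; exact h ⟨rfl, rfl⟩)]
      refine Finset.sum_eq_zero fun b _ => ?_
      rw [star_apply, fourier, of_apply, of_apply, if_neg h, star_zero, mul_zero]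
  · intro w _ hw
    refine Finset.sum_eq_zero fun b _ => ?_
    rw [fourier, of_apply, if_neg (fun h => hw h.2.symm), zero_mul]
  · simp
  · intro i _ hi
    refine Finset.sum_eq_zero fun w _ => Finset.sum_eq_zero fun b _ => ?_
    rw [fourier, of_apply, if_neg (fun h => hi h.1.symm), zero_mul]
  · simp

lemma fourier_mul_oracleMatrix (W : ℕ) (x : ι → ZMod q) :
    fourier ι q W * oracleMatrix W (toInput x) =
      phaseOracle queryPos queryVal x * fourier ι q W := by
  ext j j'
  rw [mul_apply, phaseOracle, diagonal_mul,
    Finset.sum_eq_single (⟨j'.1.1, j'.1.2 + toInput x j'.1.1⟩, j'.2)]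
  · have hv : queryVal ((⟨j'.1.1, j'.1.2 + toInput x j'.1.1⟩, j'.2) : QIdx ι (fun _ => q) W) =
        queryVal j' + x j'.1.1 := by
      simp only [queryVal, toInput]
      refine ((ZMod.finEquiv q).map_add _ _).trans ?_
      rw [RingEquiv.apply_symm_apply]
    simp only [fourier, oracleMatrix, of_apply, and_self, if_true, mul_one, hv]
    split_ifs with h
    · rw [mul_add, AddChar.map_add_eq_mul, queryPos, h.1]
      ring
    · rw [mul_zero]
  · intro l _ hl
    rw [oracleMatrix, of_apply, if_neg, mul_zero]
    rintro ⟨h1, h2⟩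
    exact hl (Prod.ext h2 h1)
  · simp

lemma phaseOracle_mem_unitaryGroup {τ : Type} [Fintype τ] [DecidableEq τ] (idx : τ → ι)
    (β : τ → ZMod q) (x : ι → ZMod q) : phaseOracle idx β x ∈ Matrix.unitaryGroup τ ℂ := by
  rw [Matrix.mem_unitaryGroup_iff, phaseOracle, star_eq_conjTranspose, diagonal_conjTranspose,
    diagonal_mul_diagonal, ← diagonal_one]
  congr 1
  funext j
  rw [Pi.star_apply, star_stdAddChar, ← AddChar.map_add_eq_mul, add_neg_cancel,
    AddChar.map_zero_eq_one]

lemma mul_qProd {τ : Type} [Fintype τ] [DecidableEq τ] {F D O : Matrix τ τ ℂ}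
    {U V : ℕ → Matrix τ τ ℂ} (hO : F * O = D * F) (hU : ∀ t, F * U t = V t * F) (t : ℕ) :
    F * qProd U O t = qProd V D t * F := by
  induction t with
  | zero => exact hU 0
  | succ t ih =>
    rw [qProd, qProd, ← Matrix.mul_assoc, ← Matrix.mul_assoc, hU, Matrix.mul_assoc (V _), hO,
      Matrix.mul_assoc, Matrix.mul_assoc, ih]
    simp only [Matrix.mul_assoc]

lemma qProd_mem_unitaryGroup {τ : Type} [Fintype τ] [DecidableEq τ] {U : ℕ → Matrix τ τ ℂ}
    {O : Matrix τ τ ℂ} (hU : ∀ t, U t ∈ Matrix.unitaryGroup τ ℂ)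
    (hO : O ∈ Matrix.unitaryGroup τ ℂ) (t : ℕ) : qProd U O t ∈ Matrix.unitaryGroup τ ℂ := by
  induction t with
  | zero => exact hU 0
  | succ t ih => exact mul_mem (mul_mem (hU _) hO) ih

variable (A : QAlg ι (fun _ => q))

/-- The final state of a query algorithm, computed by phase queries. -/
lemma finalState_toInput (x : ι → ZMod q) :
    A.finalState (toInput x) = star (fourier ι q A.W) *ᵥ
      (qProd (fun t => fourier ι q A.W * A.U t * star (fourier ι q A.W))
        (phaseOracle queryPos queryVal x) A.T *ᵥ (fourier ι q A.W *ᵥ A.init)) := by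
  have hF : star (fourier ι q A.W) * fourier ι q A.W = 1 :=
    Matrix.mem_unitaryGroup_iff'.1 (fourier_mem_unitaryGroup A.W)
  rw [mulVec_mulVec A.init, ← mul_qProd (fourier_mul_oracleMatrix A.W x), mulVec_mulVec,
    ← Matrix.mul_assoc, hF, Matrix.one_mul, QAlg.finalState]
  intro t
  rw [Matrix.mul_assoc _ _ (fourier ι q A.W), hF, Matrix.mul_one]

lemma sum_outProb_le (x : ι → ZMod q) :
    A.outProb (toInput x) (some true) + A.outProb (toInput x) (some false) ≤ 1 := by
  have hF := fourier_mem_unitaryGroup (ι := ι) (q := q) A.W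
  have h : ∑ j, ‖A.finalState (toInput x) j‖ ^ 2 = 1 := by
    rw [finalState_toInput, sum_norm_sq_mulVec (Unitary.star_mem hF),
      sum_norm_sq_mulVec (qProd_mem_unitaryGroup
        (fun t => mul_mem (mul_mem hF (A.unitary t)) (Unitary.star_mem hF))
        (phaseOracle_mem_unitaryGroup _ _ _) _), sum_norm_sq_mulVec hF, A.init_norm]
  rw [QAlg.outProb, QAlg.outProb, ← Finset.sum_add_distrib, ← h]
  refine Finset.sum_le_sum fun j _ => ?_
  have := sq_nonneg ‖A.finalState (toInput x) j‖
  split_ifs with h1 h2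
  · rw [h1] at h2
    simp at h2
  all_goals simp [this]

/-- The acceptance probabilities on uniform inputs and on inputs with a planted zero-sum `k`-set
are close. -/
lemma planted_outProb_le {k : ℕ} (hk : 1 ≤ k) (hT : 1024 * A.T ≤ Fintype.card ι) (v : Option Bool) :
    ∑ S ∈ powersetCard k (univ : Finset ι),
        (q : ℝ) * ∑ x : ι → ZMod q, (if ∑ i ∈ S, x i = 0 then A.outProb (toInput x) v else 0) ≤
      ((Fintype.card ι).choose k : ℝ) * ∑ x : ι → ZMod q, A.outProb (toInput x) v +
      (Fintype.card (ι → ZMod q) : ℝ) *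
        ((81 / 1024) * ((Fintype.card ι).choose k : ℝ) +
          130 * (A.T : ℝ) ^ 2 * A.T.choose (k - 1)) := by
  have hF := fourier_mem_unitaryGroup (ι := ι) (q := q) A.W
  have hK : ∀ w (j : QIdx ι (fun _ => q) A.W),
      ‖((diagonal (fun j => if A.out j = v then (1 : ℂ) else 0) *
        star (fourier ι q A.W)) *ᵥ w) j‖ ^ 2 =
      if A.out j = v then ‖(star (fourier ι q A.W) *ᵥ w) j‖ ^ 2 else 0 := by
    intro w j
    rw [← mulVec_mulVec, mulVec_diagonal]
    split_ifs <;> simp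
  refine planted_sum_le queryPos queryVal
    (fun t => mul_mem (mul_mem hF (A.unitary t)) (Unitary.star_mem hF))
    (by rw [sum_norm_sq_mulVec hF, A.init_norm])
    (K := diagonal (fun j => if A.out j = v then (1 : ℂ) else 0) * star (fourier ι q A.W))
    ?_ hk hT fun x => ?_
  · intro w
    rw [← sum_norm_sq_mulVec (Unitary.star_mem hF) w]
    refine Finset.sum_le_sum fun j _ => ?_
    rw [hK]
    split_ifs
    · rfl
    · positivity
  · rw [QAlg.outProb, finalState_toInput]
    exact Finset.sum_congr rfl fun j _ => (hK _ j).symm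

end Fourier

/-! ### Algorithms for `k`-SUM distinguish uniform from planted inputs -/

section Gap

variable {ι : Type} {q : ℕ} [Fintype ι] [DecidableEq ι] [NeZero q]

/-- The number of zero-sum `k`-sets. -/
def zeroSums (k : ℕ) (x : ι → ZMod q) : ℕ :=
  ((powersetCard k (univ : Finset ι)).filter fun S => ∑ i ∈ S, x i = 0).card

lemma sum_zeroSums_mul (k : ℕ) (p : (ι → ZMod q) → ℝ) :
    ∑ x, (zeroSums k x : ℝ) * p x = ∑ S ∈ powersetCard k (univ : Finset ι),
      ∑ x : ι → ZMod q, if ∑ i ∈ S, x i = 0 then p x else 0 := by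
  rw [Finset.sum_comm]
  refine Finset.sum_congr rfl fun x _ => ?_
  rw [← Finset.sum_filter, Finset.sum_const, nsmul_eq_mul, zeroSums]

lemma q_mul_sum_zeroSums {k : ℕ} (hk : 1 ≤ k) :
    (q : ℝ) * ∑ x : ι → ZMod q, (zeroSums k x : ℝ) =
      ((Fintype.card ι).choose k : ℝ) * (Fintype.card (ι → ZMod q) : ℝ) := by
  have h := sum_zeroSums_mul (ι := ι) (q := q) k fun _ => 1
  simp only [mul_one] at h
  rw [h, Finset.mul_sum, Finset.sum_congr rfl fun S hS => ?_, Finset.sum_const, card_powersetCard,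
    card_univ, nsmul_eq_mul]
  rw [Finset.sum_boole, card_sum_eq_zero S]
  rw [← Finset.card_pos, (mem_powersetCard.1 hS).2]
  exact hk

lemma gap_le_planted_sum {k : ℕ} (hk : 1 ≤ k) (hq : 2 * (Fintype.card ι).choose k ≤ q)
    {p : (ι → ZMod q) → ℝ}
    (hpos : ∀ x, (∃ S : Finset ι, S.card = k ∧ ∑ i ∈ S, x i = 0) → 2 / 3 ≤ p x)
    (hneg : ∀ x, (¬ ∃ S : Finset ι, S.card = k ∧ ∑ i ∈ S, x i = 0) → p x ≤ 1 / 3) :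
    ((Fintype.card ι).choose k : ℝ) * ∑ x, p x +
      ((Fintype.card ι).choose k : ℝ) / 6 * (Fintype.card (ι → ZMod q) : ℝ) ≤
    ∑ S ∈ powersetCard k (univ : Finset ι),
      (q : ℝ) * ∑ x : ι → ZMod q, (if ∑ i ∈ S, x i = 0 then p x else 0) := by
  set c : ℝ := ((Fintype.card ι).choose k : ℝ) with hc
  have hc0 : 0 ≤ c := Nat.cast_nonneg _
  have hq' : 2 * c ≤ q := by
    rw [hc]
    exact_mod_cast hq
  have hx : ∀ x, 2 / 3 * (q * zeroSums k x - c) + c / 3 * (1 - zeroSums k x) ≤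
      (q * zeroSums k x - c) * p x := by
    intro x
    by_cases h : ∃ S : Finset ι, S.card = k ∧ ∑ i ∈ S, x i = 0
    · have hN : (1 : ℝ) ≤ zeroSums k x := by
        obtain ⟨S, hS, h0⟩ := h
        exact_mod_cast Finset.card_pos.2
          ⟨S, mem_filter.2 ⟨mem_powersetCard.2 ⟨subset_univ S, hS⟩, h0⟩⟩
      have h1 : 0 ≤ q * zeroSums k x - c := by nlinarith
      nlinarith [mul_le_mul_of_nonneg_left (hpos x h) h1]
    · have hN : zeroSums k x = 0 := by
        refine Finset.card_eq_zero.2 (Finset.filter_eq_empty_iff.2 fun S hS h0 => h ⟨S, ?_, h0⟩)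
        exact (mem_powersetCard.1 hS).2
      rw [hN, Nat.cast_zero]
      nlinarith [hneg x h]
  have hsum := Finset.sum_le_sum fun x (_ : x ∈ univ) => hx x
  have hN := q_mul_sum_zeroSums (ι := ι) (q := q) hk
  have hp := sum_zeroSums_mul k p
  rw [Finset.sum_add_distrib, ← Finset.mul_sum, ← Finset.mul_sum, Finset.sum_sub_distrib,
    Finset.sum_sub_distrib, ← Finset.mul_sum, hN, Finset.sum_const, Finset.sum_const, card_univ]
    at hsum
  simp only [sub_mul, Finset.sum_sub_distrib, mul_assoc, ← Finset.mul_sum, hp] at hsum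
  rw [← Finset.mul_sum]
  have hM : (0 : ℝ) ≤ ∑ x : ι → ZMod q, (zeroSums k x : ℝ) :=
    Finset.sum_nonneg fun _ _ => Nat.cast_nonneg _
  simp only [nsmul_eq_mul, mul_one] at hsum
  rw [← hc] at hN
  nlinarith [mul_le_mul_of_nonneg_right hq' hM]

end Gap

lemma kSUMfn_toInput {n q : ℕ} [NeZero q] (k : ℕ) (x : Fin n → ZMod q) :
    kSUMfn n q k (toInput x) =
      some (ofProp (∃ S : Finset (Fin n), S.card = k ∧ ∑ i ∈ S, x i = 0)) := by
  have hcast : ∀ i, ((toInput x i : ℕ) : ZMod q) = x i := by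
    intro i
    obtain ⟨m, rfl⟩ := Nat.exists_eq_succ_of_ne_zero (NeZero.ne q)
    exact ZMod.natCast_zmod_val (x i)
  have h : ∀ S : Finset (Fin n), (∑ i ∈ S, (toInput x i : ℕ)) % q = 0 ↔ ∑ i ∈ S, x i = 0 := by
    intro S
    rw [← Nat.dvd_iff_mod_eq_zero, ← ZMod.natCast_eq_zero_iff, Nat.cast_sum]
    simp only [hcast]
  simp only [kSUMfn, h]

/-- A query algorithm for `k`-SUM cannot make too few queries. -/
lemma choose_le_of_computes {n q k : ℕ} (hk : 1 ≤ k) (hq0 : 0 < q) (hq : 2 * n.choose k ≤ q)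
    (A : QAlg (Fin n) (fun _ => q))
    (hA : ∀ x b, kSUMfn n q k x = some b → (2 : ℝ) / 3 ≤ A.outProb x (some b))
    (hT : 1024 * A.T ≤ n) :
    (1 / 6 - 81 / 1024) * (n.choose k : ℝ) ≤ 130 * (A.T : ℝ) ^ 2 * A.T.choose (k - 1) := by
  have : NeZero q := ⟨hq0.ne'⟩
  have h1 := planted_outProb_le A hk (by rwa [Fintype.card_fin]) (some true)
  have h2 := gap_le_planted_sum (ι := Fin n) (q := q) hk (by rwa [Fintype.card_fin])
    (p := fun x => A.outProb (toInput x) (some true)) ?_ ?_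
  · have hM : (0 : ℝ) < (Fintype.card (Fin n → ZMod q) : ℝ) := by exact_mod_cast Fintype.card_pos
    have h3 := h2.trans h1
    rw [add_le_add_iff_left, mul_comm, mul_le_mul_iff_right₀ hM, Fintype.card_fin] at h3
    linarith
  · intro x hx
    exact hA _ true (by
      rw [kSUMfn_toInput]
      exact congrArg some (@decide_eq_true _ (Classical.propDecidable _) hx))
  · intro x hx
    have h3 := hA (toInput x) false (by
      rw [kSUMfn_toInput]
      exact congrArg some (@decide_eq_false _ (Classical.propDecidable _) hx))
    have h4 := sum_outProb_le A x
    linarith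

/-! ### Every function is computed by querying all positions -/

section QueryAll

variable {n q : ℕ} [NeZero n] [NeZero q]

/-- The workspace size needed to store an input. -/
def memSize (n q : ℕ) : ℕ := Fintype.card (Fin n → Fin q)

/-- Reading the stored input from the workspace register. -/
noncomputable def memEquiv (n q : ℕ) : Fin (memSize n q) ≃ (Fin n → Fin q) :=
  (Fintype.equivFin (Fin n → Fin q)).symm

/-- Swap the answer register with the memory cell of the queried position, and move on to the
next position. -/
noncomputable def storeAndMove (n q : ℕ) [NeZero n] :
    Equiv.Perm (QIdx (Fin n) (fun _ => q) (memSize n q)) where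
  toFun j := (⟨j.1.1 + 1, memEquiv n q j.2 j.1.1⟩,
    (memEquiv n q).symm (Function.update (memEquiv n q j.2) j.1.1 j.1.2))
  invFun j := (⟨j.1.1 - 1, memEquiv n q j.2 (j.1.1 - 1)⟩,
    (memEquiv n q).symm (Function.update (memEquiv n q j.2) (j.1.1 - 1) j.1.2))
  left_inv := by
    rintro ⟨⟨i, a⟩, w⟩
    simp
  right_inv := by
    rintro ⟨⟨i, a⟩, w⟩
    simp

lemma permMatrix_mem_unitaryGroup {τ : Type} [Fintype τ] [DecidableEq τ] (σ : Equiv.Perm τ) :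
    σ.permMatrix ℂ ∈ Matrix.unitaryGroup τ ℂ := by
  rw [Matrix.mem_unitaryGroup_iff, star_eq_conjTranspose, conjTranspose_permMatrix,
    ← permMatrix_mul, inv_mul_cancel, permMatrix_one]

lemma permMatrix_inv_mulVec_single {τ : Type} [Fintype τ] [DecidableEq τ] (σ : Equiv.Perm τ)
    (j : τ) : (σ⁻¹.permMatrix ℂ) *ᵥ Pi.single j 1 = Pi.single (σ j) 1 := by
  rw [permMatrix_mulVec]
  funext l
  simp only [Function.comp_apply, Pi.single_apply, Equiv.Perm.inv_eq_iff_eq, eq_comm (a := l)]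

/-- The basis state in which nothing has been read. -/
noncomputable def blank (n q : ℕ) [NeZero n] [NeZero q] :
    QIdx (Fin n) (fun _ => q) (memSize n q) :=
  (⟨0, 0⟩, (memEquiv n q).symm fun _ => 0)

/-- The unitaries of the algorithm that reads the whole input. -/
noncomputable def readStep (n q : ℕ) [NeZero n] (t : ℕ) :
    Matrix (QIdx (Fin n) (fun _ => q) (memSize n q)) (QIdx (Fin n) (fun _ => q) (memSize n q)) ℂ :=
  if t = 0 then 1 else (storeAndMove n q)⁻¹.permMatrix ℂ

/-- The algorithm that reads the whole input. -/
noncomputable def queryAll (f : PartialFn (Fin n) (fun _ => q)) : QAlg (Fin n) (fun _ => q) where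
  T := n
  W := memSize n q
  U := readStep n q
  unitary t := by
    rw [readStep]
    split_ifs
    · exact one_mem _
    · exact permMatrix_mem_unitaryGroup _
  init := Pi.single (blank n q) 1
  init_norm := by
    rw [Finset.sum_eq_single (blank n q)]
    · simp
    · intro j _ hj
      simp [hj]
    · simp
  out j := f (memEquiv n q j.2)

lemma oracleMatrix_mulVec_single {W : ℕ} (x : Input (Fin n) (fun _ => q))
    (j : QIdx (Fin n) (fun _ => q) W) :
    oracleMatrix W x *ᵥ Pi.single j 1 = Pi.single (⟨j.1.1, j.1.2 + x j.1.1⟩, j.2) 1 := by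
  funext l
  rw [mulVec_single_one, col_apply, oracleMatrix, of_apply, Pi.single_apply]
  refine if_congr ?_ rfl rfl
  rw [Prod.ext_iff, and_comm]

lemma qProd_readStep (x : Input (Fin n) (fun _ => q))
    {t : ℕ} (ht : t ≤ n) :
    qProd (readStep n q) (oracleMatrix (memSize n q) x) t *ᵥ Pi.single (blank n q) 1 =
      Pi.single (⟨Fin.ofNat n t, 0⟩,
        (memEquiv n q).symm fun i => if (i : ℕ) < t then x i else 0) 1 := by
  induction t with
  | zero =>
    have h0 : readStep n q 0 = 1 := rfl
    rw [qProd, h0, one_mulVec]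
    simp [blank]
  | succ t ih =>
    have ht' : (Fin.ofNat n t : ℕ) = t := Nat.mod_eq_of_lt ht
    have hU : readStep n q (t + 1) = (storeAndMove n q)⁻¹.permMatrix ℂ := rfl
    rw [qProd, ← mulVec_mulVec, ← mulVec_mulVec, ih (by omega), oracleMatrix_mulVec_single, hU,
      permMatrix_inv_mulVec_single]
    have hs : Fin.ofNat n (t + 1) = Fin.ofNat n t + 1 := by
      ext
      simp [Fin.val_add]
    congr 1
    simp only [storeAndMove, Equiv.coe_fn_mk, Equiv.apply_symm_apply, ht', lt_irrefl, if_false, hs]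
    congr 2
    funext i
    by_cases hi : i = Fin.ofNat n t
    · subst hi
      rw [Function.update_self, if_pos (by omega), zero_add]
    · have hit : (i : ℕ) ≠ t := fun h => hi (Fin.ext (h.trans ht'.symm))
      rw [Function.update_of_ne hi]
      refine if_congr ?_ rfl rfl
      omega

lemma outProb_queryAll (f : PartialFn (Fin n) (fun _ => q)) (x : Input (Fin n) (fun _ => q)) :
    (queryAll f).outProb x (f x) = 1 := by
  have h := qProd_readStep x le_rfl
  simp only [Fin.is_lt, if_true] at h
  change ∑ j : QIdx (Fin n) (fun _ => q) (memSize n q), (if f (memEquiv n q j.2) = f x then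
    ‖(qProd (readStep n q) (oracleMatrix (memSize n q) x) n *ᵥ Pi.single (blank n q) 1) j‖ ^ 2
    else 0) = 1
  rw [h, Finset.sum_eq_single (⟨Fin.ofNat n n, 0⟩, (memEquiv n q).symm x)]
  · simp
  · intro j _ hj
    rw [Pi.single_eq_of_ne hj]
    simp
  · simp

/-- The quantum query complexity is attained. -/
lemma exists_qAlg_T_le_Qq (f : PartialFn (Fin n) (fun _ => q)) :
    ∃ A : QAlg (Fin n) (fun _ => q), A.T ≤ Qq f ∧
      ∀ x b, f x = some b → (2 : ℝ) / 3 ≤ A.outProb x (some b) := by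
  refine Nat.sInf_mem (s := {d | ∃ A : QAlg (Fin n) (fun _ => q), A.T ≤ d ∧
    ∀ x b, f x = some b → (2 : ℝ) / 3 ≤ A.outProb x (some b)}) ⟨n, queryAll f, le_rfl, ?_⟩
  intro x b hb
  rw [← hb, outProb_queryAll]
  norm_num

end QueryAll

/-! ### Numerical estimates -/

section Numerics

lemma sq_mul_choose_le {n m T : ℕ} (hT : 1 ≤ T) (hTn : 1024 * T ≤ n)
    (h : ((m + 1 : ℕ) : ℝ) * (T : ℝ) ^ (m + 2) ≤ (1 / 1024) ^ (m + 2) * (n : ℝ) ^ (m + 1)) :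
    (T : ℝ) ^ 2 * T.choose m ≤ (1 / 1024) ^ 2 * n.choose (m + 1) := by
  obtain ⟨N, rfl⟩ : ∃ N, n = N + 1 := ⟨n - 1, by omega⟩
  have hT0 : (0 : ℝ) < T := by exact_mod_cast hT
  have hn0 : (0 : ℝ) < ((N + 1 : ℕ) : ℝ) := by positivity
  have hy : ((N + 1 : ℕ) : ℝ) / (2 * T) * T ≤ N := by
    have h1 : (1024 : ℝ) * T ≤ ((N + 1 : ℕ) : ℝ) := by exact_mod_cast hTn
    have h2 : (1 : ℝ) ≤ T := by exact_mod_cast hT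
    push_cast at h1 ⊢
    field_simp
    linarith
  have hy1 : 1 ≤ ((N + 1 : ℕ) : ℝ) / (2 * T) := by
    rw [one_le_div (by positivity)]
    exact_mod_cast (by omega : 2 * T ≤ N + 1)
  have h1 := choose_mul_pow_le hy1 hy m
  rw [div_pow, mul_pow, ← mul_div_assoc, div_le_iff₀ (by positivity)] at h1
  have h2 : ((N + 1 : ℕ) : ℝ) * N.choose m = (N + 1).choose (m + 1) * ((m + 1 : ℕ) : ℝ) := by
    exact_mod_cast Nat.add_one_mul_choose_eq N m
  have h3 : (2 : ℝ) ^ m * (1 / 1024) ^ (m + 2) ≤ (1 / 1024) ^ 2 := by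
    have : (2 * (1 / 1024) : ℝ) ^ m ≤ 1 := pow_le_one₀ (by norm_num) (by norm_num)
    rw [pow_add, ← mul_assoc, ← mul_pow]
    exact mul_le_of_le_one_left (by positivity) this
  have hpow : (0 : ℝ) < ((N + 1 : ℕ) : ℝ) ^ (m + 1) := by positivity
  refine le_of_mul_le_mul_right ?_ hpow
  have hc : (0 : ℝ) ≤ (N + 1).choose (m + 1) := Nat.cast_nonneg _
  calc (T : ℝ) ^ 2 * T.choose m * ((N + 1 : ℕ) : ℝ) ^ (m + 1)
      = (T : ℝ) ^ 2 * ((N + 1 : ℕ) : ℝ) * (T.choose m * ((N + 1 : ℕ) : ℝ) ^ m) := by ring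
    _ ≤ (T : ℝ) ^ 2 * ((N + 1 : ℕ) : ℝ) * (N.choose m * (2 ^ m * (T : ℝ) ^ m)) := by gcongr
    _ = 2 ^ m * (T : ℝ) ^ (m + 2) * (((N + 1 : ℕ) : ℝ) * N.choose m) := by ring
    _ = 2 ^ m * (N + 1).choose (m + 1) * (((m + 1 : ℕ) : ℝ) * (T : ℝ) ^ (m + 2)) := by
        rw [h2]
        ring
    _ ≤ 2 ^ m * (N + 1).choose (m + 1) *
        ((1 / 1024) ^ (m + 2) * ((N + 1 : ℕ) : ℝ) ^ (m + 1)) := by gcongr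
    _ = (2 ^ m * (1 / 1024) ^ (m + 2)) *
        ((N + 1).choose (m + 1) * ((N + 1 : ℕ) : ℝ) ^ (m + 1)) := by ring
    _ ≤ (1 / 1024) ^ 2 * ((N + 1).choose (m + 1) * ((N + 1 : ℕ) : ℝ) ^ (m + 1)) := by gcongr
    _ = _ := by ring

lemma bounds_of_lt {n m : ℕ} {T : ℝ} (hn : 1 ≤ n) (hT0 : 0 ≤ T)
    (hT : T < 1 / 1024 * ((n : ℝ) ^ (((m + 1 : ℕ) : ℝ) / (((m + 1 : ℕ) : ℝ) + 1)) /
      Real.sqrt ((m + 1 : ℕ) : ℝ))) :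
    1024 * T ≤ n ∧
      ((m + 1 : ℕ) : ℝ) * T ^ (m + 2) ≤ (1 / 1024) ^ (m + 2) * (n : ℝ) ^ (m + 1) := by
  set r : ℝ := (n : ℝ) ^ (((m + 1 : ℕ) : ℝ) / (((m + 1 : ℕ) : ℝ) + 1)) with hr
  set s : ℝ := Real.sqrt ((m + 1 : ℕ) : ℝ) with hs
  have hk1 : (1 : ℝ) ≤ ((m + 1 : ℕ) : ℝ) := by exact_mod_cast Nat.succ_pos m
  have hs1 : 1 ≤ s := Real.one_le_sqrt.2 hk1
  have hs2 : s ^ 2 = ((m + 1 : ℕ) : ℝ) := Real.sq_sqrt (by positivity)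
  have hn1 : (1 : ℝ) ≤ n := by exact_mod_cast hn
  have hr0 : 0 ≤ r := by positivity
  have hTs : T * s ≤ 1 / 1024 * r := by
    have := hT.le
    rwa [← mul_div_assoc, le_div_iff₀ (by linarith)] at this
  have hrn : r ≤ n := by
    conv_rhs => rw [← Real.rpow_one (n : ℝ)]
    refine Real.rpow_le_rpow_of_exponent_le hn1 ?_
    rw [div_le_one (by positivity)]
    linarith
  have hrpow : r ^ (m + 2) = (n : ℝ) ^ (m + 1) := by
    rw [hr, ← Real.rpow_natCast, ← Real.rpow_mul (by positivity), ← Real.rpow_natCast]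
    congr 1
    push_cast
    field_simp
    ring
  constructor
  · nlinarith
  · calc ((m + 1 : ℕ) : ℝ) * T ^ (m + 2) = T ^ (m + 2) * s ^ 2 := by rw [hs2, mul_comm]
      _ ≤ T ^ (m + 2) * s ^ (m + 2) := by
          gcongr
          omega
      _ = (T * s) ^ (m + 2) := (mul_pow _ _ _).symm
      _ ≤ (1 / 1024 * r) ^ (m + 2) := by gcongr
      _ = _ := by rw [mul_pow, hrpow]

end Numerics

end QC.Planted

/-- For `k`-SUM on `n` numbers from `[q]`, if `q ≥ 2·(n choose k)`
then `Q(k-SUM) = Ω(n^{k/(k+1)} / √k)` with an absolute constant. -/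
theorem kSUM_quantum_lower_bound :
    ∃ C : ℝ, 0 < C ∧ ∀ n k q : ℕ, k ≤ n → 2 * n.choose k ≤ q →
      C * ((n : ℝ) ^ ((k : ℝ) / ((k : ℝ) + 1)) / Real.sqrt k) ≤
        (QC.Qq (QC.kSUMfn n q k) : ℝ) := by
  refine ⟨1 / 1024, by norm_num, fun n k q hkn hq => ?_⟩
  obtain rfl | ⟨m, rfl⟩ : k = 0 ∨ ∃ m, k = m + 1 :=
    k.eq_zero_or_pos.imp_right fun h => ⟨k - 1, by omega⟩
  · simp
  have hc : 0 < n.choose (m + 1) := Nat.choose_pos hkn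
  have : NeZero n := ⟨by omega⟩
  have : NeZero q := ⟨by omega⟩
  obtain ⟨A, hAT, hA⟩ := QC.Planted.exists_qAlg_T_le_Qq (QC.kSUMfn n q (m + 1))
  refine le_trans ?_ (Nat.cast_le.2 hAT)
  by_contra! hlt
  obtain ⟨h1, h2⟩ := QC.Planted.bounds_of_lt (by omega) (Nat.cast_nonneg _) hlt
  have hTn : 1024 * A.T ≤ n := by exact_mod_cast h1
  have h3 := QC.Planted.choose_le_of_computes (by omega) (by omega) hq A hA hTn
  rw [Nat.add_sub_cancel] at h3
  have hc' : (0 : ℝ) < n.choose (m + 1) := by exact_mod_cast hc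
  obtain hT | hT := A.T.eq_zero_or_pos
  · rw [hT] at h3
    norm_num at h3
    linarith
  · have h4 := QC.Planted.sq_mul_choose_le hT hTn h2
    linarith
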